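/- arXiv:2507.15196 — 2 statements merged into one kernel-verified Lean document; each statement's English description precedes it below -/
import Mathlib

section
/- Discretized entropy Balog–Szemerédi–Gowers theorem: Let n ∈ ℕ and let (X, Y) be a bivariate real random variable with bounded range satisfying Hₙ(X) + Hₙ(Y) − Hₙ(X, Y) ≤ log K₁. Then there exists a random variable (X'', Y', X', Y'') (on some probability space) such that: (i) (X', Y') has the same distribution as (X, Y); (ii) X' and X'' are conditionally i.i.d. given D_n(Y'); (iii) Y' and Y'' are conditionally i.i.d. given D_n(X'); (iv) (X'', Y') and Y'' are conditionally independent given D_n(X'); in particular X'' and Y'' are conditionally independent given D_n(X', Y'). Moreover Hₙ(X'' | X', Y') ≥ Hₙ(X) − log K₁ and Hₙ(Y'' | X', Y') ≥ Hₙ(Y) − log K₁. In addition, there is an absolute constant A such that for all κ ≥ 2 and all weakly κ-bi-Lipschitz real-valued functions f, g with Hₙ(f(X) + g(Y)) − (Hₙ(X) + Hₙ(Y))/2 ≤ log K₂, one has Hₙ(f(X'') + g(Y'') | X', Y') − (Hₙ(X) + Hₙ(Y))/2 ≤ 4 log K₁ + 3 log K₂ + A·log κ. -/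
open MeasureTheory ProbabilityTheory Real

/-- The dyadic discretization map `D_n(x) = 2^{-n} ⌊2^n x⌋`. -/
noncomputable def Dn (n : ℕ) (x : ℝ) : ℝ := (⌊(2 : ℝ) ^ n * x⌋ : ℝ) / (2 : ℝ) ^ n

/-- Shannon entropy (base 2) of the discrete random variable `f` under `P`. -/
noncomputable def entOf {Ω : Type*} [MeasurableSpace Ω] {S : Type*}
    (P : Measure Ω) (f : Ω → S) : ℝ :=
  ∑' s : S, -((P (f ⁻¹' {s})).toReal * Real.logb 2 (P (f ⁻¹' {s})).toReal)

/-- Conditional entropy `H(f | g) = H(f, g) - H(g)` for discrete random variables. -/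
noncomputable def condEntOf {Ω : Type*} [MeasurableSpace Ω] {S T : Type*}
    (P : Measure Ω) (f : Ω → S) (g : Ω → T) : ℝ :=
  entOf P (fun ω => (f ω, g ω)) - entOf P g

/-- `H_n(X)`: entropy of `D_n(X)`. -/
noncomputable def Hn {Ω : Type*} [MeasurableSpace Ω] (P : Measure Ω) (n : ℕ) (X : Ω → ℝ) : ℝ :=
  entOf P (fun ω => Dn n (X ω))

/-- `H_n(X,Y)`: entropy of `(D_n(X), D_n(Y))`. -/
noncomputable def Hn2 {Ω : Type*} [MeasurableSpace Ω] (P : Measure Ω) (n : ℕ)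
    (X Y : Ω → ℝ) : ℝ :=
  entOf P (fun ω => (Dn n (X ω), Dn n (Y ω)))

/-- `U` and `V` are conditionally i.i.d. given the (discrete) random variable `Z`. -/
def CondIIDGiven {Ω : Type*} [MeasurableSpace Ω] {S U : Type*} [MeasurableSpace S]
    (P : Measure Ω) (f f' : Ω → S) (Z : Ω → U) : Prop :=
  ∀ u : U, P (Z ⁻¹' {u}) ≠ 0 →
    ProbabilityTheory.IndepFun f f' (ProbabilityTheory.cond P (Z ⁻¹' {u})) ∧
      Measure.map f (ProbabilityTheory.cond P (Z ⁻¹' {u})) =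
        Measure.map f' (ProbabilityTheory.cond P (Z ⁻¹' {u}))

/-- `f` and `g` are conditionally independent given the (discrete) random variable `Z`. -/
def CondIndepGiven {Ω : Type*} [MeasurableSpace Ω] {S T U : Type*}
    [MeasurableSpace S] [MeasurableSpace T]
    (P : Measure Ω) (f : Ω → S) (g : Ω → T) (Z : Ω → U) : Prop :=
  ∀ u : U, P (Z ⁻¹' {u}) ≠ 0 →
    ProbabilityTheory.IndepFun f g (ProbabilityTheory.cond P (Z ⁻¹' {u}))

/-- `f` is weakly κ-bi-Lipschitz on `D` with at most `L` pieces: `f` is κ-Lipschitz on `D`,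
and `D` decomposes into at most `L` pieces on each of which `f` has a κ-Lipschitz inverse. -/
def WeaklyBiLipschitzOn (f : ℝ → ℝ) (D : Set ℝ) (κ : ℝ) (L : ℕ) : Prop :=
  (∀ x ∈ D, ∀ y ∈ D, |f x - f y| ≤ κ * |x - y|) ∧
    ∃ R : Fin L → Set ℝ, D ⊆ (⋃ i, R i) ∧
      ∀ i : Fin L, ∀ x ∈ D ∩ R i, ∀ y ∈ D ∩ R i, |x - y| ≤ κ * |f x - f y|


/-- Mass of the fiber of `F` through `i`. -/
noncomputable def prF {ι T : Type*} [Fintype ι] (w : ι → ℝ) (F : ι → T) (i : ι) : ℝ :=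
  open Classical in ∑ j, if F j = F i then w j else 0

/-- Entropy on a finite weighted set. -/
noncomputable def HF {ι T : Type*} [Fintype ι] (w : ι → ℝ) (F : ι → T) : ℝ :=
  ∑ i, w i * -(Real.logb 2 (prF w F i))

section finitePart

variable {ι : Type*} [Fintype ι] {w : ι → ℝ}

lemma prF_pos {T : Type*} (hw : ∀ i, 0 < w i) (F : ι → T) (i : ι) : 0 < prF w F i := by
  classical
  unfold prF
  have h1 : w i ≤ ∑ j, if F j = F i then w j else 0 := by
    have := Finset.single_le_sum (s := Finset.univ) (f := fun j => if F j = F i then w j else 0)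
      (fun j _ => by split_ifs; exacts [(hw j).le, le_rfl]) (Finset.mem_univ i)
    simpa using this
  exact (hw i).trans_le (by convert h1)

lemma prF_mono {T U : Type*} (hw : ∀ i, 0 < w i) {F : ι → T} {G : ι → U}
    (h : ∀ i j, F i = F j → G i = G j) (i : ι) : prF w F i ≤ prF w G i := by
  classical
  unfold prF
  apply Finset.sum_le_sum
  intro j _
  by_cases h1 : F j = F i
  · simp [h1, h j i h1]
  · simp only [h1, if_false]
    split_ifs
    exacts [(hw j).le, le_rfl]

lemma HF_mono {T U : Type*} (hw : ∀ i, 0 < w i) {F : ι → T} {G : ι → U}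
    (h : ∀ i j, F i = F j → G i = G j) : HF w G ≤ HF w F := by
  unfold HF
  apply Finset.sum_le_sum
  intro i _
  apply mul_le_mul_of_nonneg_left _ (hw i).le
  have := Real.logb_le_logb_of_le (b := 2) (by norm_num) (prF_pos hw F i) (prF_mono hw h i)
  linarith

lemma gibbs (hw : ∀ i, 0 < w i) (h1 : ∑ i, w i = 1) (φ : ι → ℝ) (hφ : ∀ i, 0 < φ i)
    (hs : ∑ i, w i * φ i ≤ 1) : ∑ i, w i * Real.logb 2 (φ i) ≤ 0 := by
  have hl : 0 < Real.log 2 := Real.log_pos (by norm_num)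
  have : ∑ i, w i * Real.logb 2 (φ i) ≤ ∑ i, (w i * φ i - w i) / Real.log 2 := by
    apply Finset.sum_le_sum
    intro i _
    rw [Real.logb, ← mul_div_assoc]
    apply div_le_div_of_nonneg_right _ hl.le
    have := Real.log_le_sub_one_of_pos (hφ i)
    nlinarith [hw i]
  refine this.trans ?_
  rw [← Finset.sum_div, Finset.sum_sub_distrib, h1]
  apply div_nonpos_of_nonpos_of_nonneg _ hl.le
  linarith

lemma prF_congr {T : Type*} {F : ι → T} {i j : ι} (h : F i = F j) : prF w F i = prF w F j := by
  unfold prF; rw [h]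

open Classical in
lemma fiber_sum_le {T : Type*} (hw : ∀ i, 0 < w i) (F : ι → T) (p : ι → Prop)
    (hp : ∀ i j, p i → p j → F i = F j) :
    ∑ i, (if p i then w i / prF w F i else 0) ≤ 1 := by
  by_cases h : ∃ i0, p i0
  · obtain ⟨i0, h0⟩ := h
    have : ∑ i, (if p i then w i / prF w F i else 0) ≤
        ∑ i, (if F i = F i0 then w i else 0) / prF w F i0 := by
      apply Finset.sum_le_sum
      intro i _
      by_cases hi : p i
      · rw [if_pos hi, if_pos (hp i i0 hi h0), prF_congr (hp i i0 hi h0)]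
      · rw [if_neg hi]
        apply div_nonneg _ (prF_pos hw F i0).le
        split_ifs
        exacts [(hw i).le, le_rfl]
    refine this.trans ?_
    rw [← Finset.sum_div]
    apply le_of_eq
    rw [div_eq_one_iff_eq (prF_pos hw F i0).ne']
    rfl
  · push Not at h
    simp [h]

lemma HF_submod {T U V : Type*} (hw : ∀ i, 0 < w i) (h1 : ∑ i, w i = 1)
    (F : ι → T) (G : ι → U) (Z : ι → V) :
    HF w (fun i => (F i, G i, Z i)) + HF w Z ≤
      HF w (fun i => (F i, Z i)) + HF w (fun i => (G i, Z i)) := by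
  classical
  set FZ := fun i => (F i, Z i) with hFZ
  set GZ := fun i => (G i, Z i) with hGZ
  set W := fun i => (F i, G i, Z i) with hW
  have key := gibbs hw h1 (fun i => prF w FZ i * prF w GZ i / (prF w W i * prF w Z i))
    (fun i => by
      have := prF_pos hw FZ i; have := prF_pos hw GZ i
      have := prF_pos hw W i; have := prF_pos hw Z i
      positivity) ?_
  · have : ∑ i, w i * Real.logb 2 (prF w FZ i * prF w GZ i / (prF w W i * prF w Z i)) =
        HF w W + HF w Z - HF w FZ - HF w GZ := by
      unfold HF
      rw [← Finset.sum_add_distrib, ← Finset.sum_sub_distrib, ← Finset.sum_sub_distrib]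
      apply Finset.sum_congr rfl
      intro i _
      have := prF_pos hw FZ i; have := prF_pos hw GZ i
      have := prF_pos hw W i; have := prF_pos hw Z i
      rw [Real.logb_div (by positivity) (by positivity), Real.logb_mul (by positivity) (by positivity),
        Real.logb_mul (by positivity) (by positivity)]
      ring
    rw [this] at key
    linarith
  · have e1 : ∀ i, w i * (prF w FZ i * prF w GZ i / (prF w W i * prF w Z i)) =
        ∑ j, ∑ k, (if FZ j = FZ i ∧ GZ k = GZ i then
          (w j * w k / prF w Z j) * (w i / prF w W i) else 0) := by
      intro i
      have ha := (prF_pos hw W i).ne'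
      have hb := (prF_pos hw Z i).ne'
      have : w i * (prF w FZ i * prF w GZ i / (prF w W i * prF w Z i)) =
        (∑ j, if FZ j = FZ i then w j else 0) * (∑ k, if GZ k = GZ i then w k else 0)
          * (w i / (prF w W i * prF w Z i)) := by
        conv_lhs => rw [prF, prF]
        rw [mul_div_assoc', mul_div_assoc']
        congr 1
        rw [mul_comm]
        congr!
      rw [this, Finset.sum_mul_sum, Finset.sum_mul]
      apply Finset.sum_congr rfl
      intro j _
      rw [Finset.sum_mul]
      apply Finset.sum_congr rfl
      intro k _
      by_cases hj : FZ j = FZ i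
      · by_cases hk : GZ k = GZ i
        · have hz : prF w Z j = prF w Z i := prF_congr (by simpa [hFZ] using (Prod.ext_iff.1 hj).2)
          simp only [hj, hk, if_true, and_self, hz]
          field_simp
        · simp [hk]
      · simp [hj]
    rw [Finset.sum_congr rfl (fun i _ => e1 i), Finset.sum_comm]
    have e2 : ∀ j, ∑ i, ∑ k, (if FZ j = FZ i ∧ GZ k = GZ i then
          (w j * w k / prF w Z j) * (w i / prF w W i) else 0) ≤ w j := by
      intro j
      rw [Finset.sum_comm]
      have hb := (prF_pos hw Z j)
      have e3 : ∀ k, ∑ i, (if FZ j = FZ i ∧ GZ k = GZ i then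
          (w j * w k / prF w Z j) * (w i / prF w W i) else 0) ≤
          (w j / prF w Z j) * (if Z k = Z j then w k else 0) := by
        intro k
        by_cases hz : Z k = Z j
        · rw [if_pos hz]
          have := fiber_sum_le hw W (fun i => FZ j = FZ i ∧ GZ k = GZ i) (by
            rintro a b ⟨h1, h2⟩ ⟨h3, h4⟩
            have h5 := h1.symm.trans h3
            have h6 := h2.symm.trans h4
            simp only [hFZ, hGZ, hW, Prod.mk.injEq] at h5 h6 ⊢
            exact ⟨h5.1, h6.1, h5.2⟩)
          have h0 : 0 ≤ w j * w k / prF w Z j := by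
            have := hw j; have := hw k; positivity
          have := mul_le_mul_of_nonneg_left this h0
          rw [Finset.mul_sum] at this
          simp only [mul_ite, mul_zero, mul_one] at this
          refine this.trans (le_of_eq ?_)
          ring
        · rw [if_neg hz, mul_zero]
          apply le_of_eq
          apply Finset.sum_eq_zero
          intro i _
          rw [if_neg]
          rintro ⟨h3, h4⟩
          simp only [hFZ, hGZ, Prod.mk.injEq] at h3 h4
          exact hz (h4.2.trans h3.2.symm)
      refine (Finset.sum_le_sum (fun k _ => e3 k)).trans (le_of_eq ?_)
      rw [← Finset.mul_sum]
      have : (∑ k, if Z k = Z j then w k else 0) = prF w Z j := rfl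
      rw [this]
      field_simp
    exact (Finset.sum_le_sum (fun j _ => e2 j)).trans h1.le

lemma HF_const {T : Type*} (h1 : ∑ i, w i = 1) (t : T) : HF w (fun _ => t) = 0 := by
  simp [HF, prF, h1]

lemma HF_add {T U : Type*} (hw : ∀ i, 0 < w i) (h1 : ∑ i, w i = 1)
    (F : ι → T) (G : ι → U) :
    HF w (fun i => (F i, G i)) ≤ HF w F + HF w G := by
  have h := HF_submod hw h1 F G (fun _ => ())
  rw [HF_const h1] at h
  have a := HF_mono hw (F := fun i => (F i, G i, ())) (G := fun i => (F i, G i)) (by simp)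
  have b := HF_mono hw (F := F) (G := fun i => (F i, ())) (by simp)
  have c := HF_mono hw (F := G) (G := fun i => (G i, ())) (by simp)
  linarith

open Classical in
lemma HF_card {T U : Type*} (hw : ∀ i, 0 < w i) (h1 : ∑ i, w i = 1)
    (F : ι → T) (Z : ι → U) (M : ℝ) (hM : 0 < M)
    (hc : ∀ j, (((Finset.univ.filter (fun i => Z i = Z j)).image F).card : ℝ) ≤ M) :
    HF w (fun i => (F i, Z i)) ≤ HF w Z + Real.logb 2 M := by
  set FZ := fun i => (F i, Z i) with hFZ
  have key := gibbs hw h1 (fun i => prF w Z i / (M * prF w FZ i))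
    (fun i => by
      have := prF_pos hw FZ i; have := prF_pos hw Z i
      positivity) ?_
  · have : ∑ i, w i * Real.logb 2 (prF w Z i / (M * prF w FZ i)) =
        HF w FZ - HF w Z - Real.logb 2 M := by
      have : Real.logb 2 M = ∑ i, w i * Real.logb 2 M := by rw [← Finset.sum_mul, h1, one_mul]
      rw [this]
      unfold HF
      rw [← Finset.sum_sub_distrib, ← Finset.sum_sub_distrib]
      apply Finset.sum_congr rfl
      intro i _
      have := prF_pos hw FZ i; have := prF_pos hw Z i
      rw [Real.logb_div (by positivity) (by positivity), Real.logb_mul (by positivity) (by positivity)]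
      ring
    rw [this] at key
    linarith
  · have e1 : ∀ i, w i * (prF w Z i / (M * prF w FZ i)) =
        ∑ j, (w j / M) * (if Z i = Z j then w i / prF w FZ i else 0) := by
      intro i
      have ha := (prF_pos hw FZ i).ne'
      have : w i * (prF w Z i / (M * prF w FZ i)) =
          (∑ j, if Z j = Z i then w j else 0) * (w i / (M * prF w FZ i)) := by
        conv_lhs => rw [prF]
        field_simp
      rw [this, Finset.sum_mul]
      apply Finset.sum_congr rfl
      intro j _
      by_cases hz : Z j = Z i
      · simp only [hz, if_true]
        field_simp
      · simp [hz, Ne.symm hz]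
    rw [Finset.sum_congr rfl (fun i _ => e1 i), Finset.sum_comm]
    have e2 : ∀ j, ∑ i, (w j / M) * (if Z i = Z j then w i / prF w FZ i else 0) ≤ w j := by
      intro j
      rw [← Finset.mul_sum]
      have : ∑ i, (if Z i = Z j then w i / prF w FZ i else 0) ≤ M := by
        refine le_trans ?_ (hc j)
        rw [← Finset.sum_filter, ← Finset.sum_fiberwise_of_maps_to (s := Finset.univ.filter (fun i => Z i = Z j))
          (t := (Finset.univ.filter (fun i => Z i = Z j)).image F) (g := F)
          (fun i hi => Finset.mem_image_of_mem F hi)]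
        refine (Finset.sum_le_card_nsmul _ _ 1 ?_).trans (by simp)
        intro v _
        rw [Finset.filter_filter, Finset.sum_filter]
        refine le_trans (le_of_eq ?_) (fiber_sum_le hw FZ (fun i => Z i = Z j ∧ F i = v) ?_)
        · apply Finset.sum_congr rfl
          intro i _
          congr
        rintro a b ⟨h1, h2⟩ ⟨h3, h4⟩
        simp [hFZ, h1, h2, h3, h4]
      have h2 := mul_le_mul_of_nonneg_left this (div_nonneg (hw j).le hM.le)
      refine h2.trans (le_of_eq ?_)
      field_simp
    exact (Finset.sum_le_sum (fun j _ => e2 j)).trans h1.le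

end finitePart

/-- Counting dyadic values. -/
lemma card_Dn {ι : Type*} (n : ℕ) (s : Finset ι) (x : ι → ℝ) (R : ℝ) (hR : 0 ≤ R)
    (F : ι → ℝ) (hF : ∀ i ∈ s, F i = Dn n (x i))
    (h : ∀ i ∈ s, ∀ j ∈ s, |x i - x j| ≤ R / 2 ^ n) :
    open Classical in ((s.image F).card : ℝ) ≤ 2 * R + 3 := by
  classical
  rcases s.eq_empty_or_nonempty with rfl | ⟨j, hj⟩
  · simp; linarith
  have h2 : (0:ℝ) < 2 ^ n := by positivity
  have hsub : s.image F ⊆ (Finset.Icc (⌊2 ^ n * x j - R⌋) (⌊2 ^ n * x j + R⌋)).image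
      (fun m : ℤ => (m : ℝ) / 2 ^ n) := by
    intro v hv
    obtain ⟨i, hi, rfl⟩ := Finset.mem_image.1 hv
    rw [hF i hi]
    refine Finset.mem_image.2 ⟨⌊2 ^ n * x i⌋, ?_, rfl⟩
    have h3 := h i hi j hj
    rw [le_div_iff₀ h2] at h3
    have h4 : |2 ^ n * x i - 2 ^ n * x j| ≤ R := by
      rw [← mul_sub, abs_mul, abs_of_pos h2]; linarith
    rw [abs_le] at h4
    rw [Finset.mem_Icc]
    exact ⟨Int.floor_le_floor (by linarith), Int.floor_le_floor (by linarith)⟩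
  have hc := (Finset.card_le_card hsub).trans Finset.card_image_le
  rw [Int.card_Icc] at hc
  have hc' : ((s.image F).card : ℝ) ≤
      ((⌊2 ^ n * x j + R⌋ + 1 - ⌊2 ^ n * x j - R⌋).toNat : ℝ) := by exact_mod_cast hc
  have h0 : (0:ℤ) ≤ ⌊2 ^ n * x j + R⌋ + 1 - ⌊2 ^ n * x j - R⌋ := by
    have : ⌊2 ^ n * x j - R⌋ ≤ ⌊2 ^ n * x j + R⌋ := Int.floor_le_floor (by linarith)
    omega
  have h5 : ((⌊2 ^ n * x j + R⌋ + 1 - ⌊2 ^ n * x j - R⌋).toNat : ℝ) =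
      ((⌊2 ^ n * x j + R⌋ + 1 - ⌊2 ^ n * x j - R⌋ : ℤ) : ℝ) := by
    exact_mod_cast Int.toNat_of_nonneg h0
  rw [h5] at hc'
  push_cast at hc'
  have h6 := Int.floor_le (2 ^ n * x j + R)
  have h7 := Int.lt_floor_add_one (2 ^ n * x j - R)
  refine le_trans (by convert hc') (by linarith)

/-- Reduction of entropies of functions of a finitely valued random variable to a finite
weighted set, with representatives chosen in a given full measure set. -/
lemma exists_rep {Ω' : Type} [MeasurableSpace Ω'] (P : Measure Ω') [IsProbabilityMeasure P]
    {S : Type} [MeasurableSpace S] [MeasurableSingletonClass S] (W : Ω' → S) (hW : Measurable W)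
    (hfin : (Set.range W).Finite) (G : Ω' → Prop) (hG : ∀ᵐ ω ∂P, G ω) :
    ∃ (ι : Type) (_ : Fintype ι) (w : ι → ℝ) (r : ι → Ω'), (∀ i, 0 < w i) ∧ ∑ i, w i = 1 ∧
      (∀ i, G (r i)) ∧
      (∀ (T : Type) (F : S → T) (i : ι), prF w (fun i => F (W (r i))) i =
        P.real {ω | F (W ω) = F (W (r i))}) ∧
      (∀ (T : Type) (F : S → T), entOf P (fun ω => F (W ω)) = HF w (fun i => F (W (r i)))) := by
  classical
  set t : Finset S := hfin.toFinset.filter (fun s => P (W ⁻¹' {s}) ≠ 0) with ht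
  have hr : ∀ i : t, ∃ ω, W ω = i ∧ G ω := by
    intro i
    have hi : P (W ⁻¹' {(i : S)}) ≠ 0 := (Finset.mem_filter.1 i.2).2
    by_contra hcon
    push Not at hcon
    apply hi
    refine measure_mono_null ?_ (ae_iff.1 hG)
    intro ω hω
    exact hcon ω hω
  choose r hr1 hr2 using hr
  have key : ∀ Q : Set S, P.real (W ⁻¹' Q) = ∑ i : t, if (i : S) ∈ Q then P.real (W ⁻¹' {(i : S)}) else 0 := by
    intro Q
    have e : W ⁻¹' Q = ⋃ s ∈ hfin.toFinset.filter (fun s => s ∈ Q), W ⁻¹' {s} := by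
      ext ω
      simp
    rw [e, measureReal_biUnion_finset]
    · rw [Finset.sum_coe_sort t (fun s => if s ∈ Q then P.real (W ⁻¹' {s}) else 0), ht,
        Finset.sum_filter, Finset.sum_filter]
      apply Finset.sum_congr rfl
      intro s _
      by_cases h0 : P (W ⁻¹' {s}) = 0
      · simp [h0, Measure.real]
      · simp [h0]
    · intro a _ b _ hab
      rw [Function.onFun, Set.disjoint_left]
      intro ω h1 h2
      exact hab (h1.symm.trans h2)
    · intro s _
      exact hW (measurableSet_singleton s)
  have hpos : ∀ i : t, 0 < P.real (W ⁻¹' {(i : S)}) := by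
    intro i
    exact ENNReal.toReal_pos (Finset.mem_filter.1 i.2).2 (measure_ne_top _ _)
  have hpr : ∀ (T : Type) (F : S → T) (i : t), prF (fun i : t => P.real (W ⁻¹' {(i : S)})) (fun i => F (W (r i))) i =
        P.real {ω | F (W ω) = F (W (r i))} := by
    intro T F i
    have := key {s | F s = F (W (r i))}
    rw [show {ω | F (W ω) = F (W (r i))} = W ⁻¹' {s | F s = F (W (r i))} from rfl, this]
    unfold prF
    apply Finset.sum_congr rfl
    intro j _
    simp [hr1]
  refine ⟨t, inferInstance, fun i => P.real (W ⁻¹' {(i : S)}), r, hpos, ?_, hr2, hpr, ?_⟩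
  · have := key Set.univ
    simpa using this.symm
  · intro T F
    unfold entOf HF
    rw [tsum_eq_sum (s := Finset.univ.image (fun i : t => F i))]
    · rw [← Finset.sum_fiberwise_of_maps_to (s := (Finset.univ : Finset t))
        (t := Finset.univ.image (fun i : t => F i)) (g := fun i : t => F i)
        (fun i hi => Finset.mem_image_of_mem _ hi)]
      apply Finset.sum_congr rfl
      intro s _
      have e1 : P.real ((fun ω => F (W ω)) ⁻¹' {s}) = ∑ i ∈ Finset.univ.filter (fun i : t => F i = s),
          P.real (W ⁻¹' {(i : S)}) := by
        rw [Finset.sum_filter]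
        exact key {x | F x = s}
      change -(P.real ((fun ω => F (W ω)) ⁻¹' {s}) * Real.logb 2 (P.real ((fun ω => F (W ω)) ⁻¹' {s}))) = _
      rw [← mul_neg]
      nth_rw 1 [e1]
      rw [Finset.sum_mul]
      apply Finset.sum_congr rfl
      intro i hi
      rw [hpr T F i, hr1 i, (Finset.mem_filter.1 hi).2]
      rfl
    · intro s hs
      have : P.real ((fun ω => F (W ω)) ⁻¹' {s}) = 0 := by
        rw [show (fun ω => F (W ω)) ⁻¹' {s} = W ⁻¹' {x | F x = s} from rfl, key]
        apply Finset.sum_eq_zero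
        intro i _
        rw [if_neg]
        intro h
        exact hs (Finset.mem_image.2 ⟨i, Finset.mem_univ _, h⟩)
      rw [Measure.real] at this
      rw [this]
      simp

lemma entOf_congr {Ω S : Type*} [MeasurableSpace Ω] {P : Measure Ω} {f g : Ω → S}
    (h : ∀ᵐ ω ∂P, f ω = g ω) : entOf P f = entOf P g := by
  unfold entOf
  congr 1
  ext s
  have : P (f ⁻¹' {s}) = P (g ⁻¹' {s}) := by
    apply measure_congr
    filter_upwards [h] with ω hω
    simp only [eq_iff_iff]
    change f ω = s ↔ g ω = s
    rw [hω]
  rw [this]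

lemma entOf_map {Ω Ω' S : Type*} [MeasurableSpace Ω] [MeasurableSpace Ω'] [MeasurableSpace S]
    [MeasurableSingletonClass S] {P : Measure Ω} {P' : Measure Ω'} {q : Ω' → Ω}
    (hq : Measurable q) (h : P'.map q = P) {f : Ω → S} (hf : Measurable f) :
    entOf P' (fun ω => f (q ω)) = entOf P f := by
  unfold entOf
  congr 1
  ext s
  rw [← h, Measure.map_apply hq (hf (measurableSet_singleton s))]
  rfl

/-- Conditionally independent extension. -/
lemma exists_ext {Γ Ω : Type} [MeasurableSpace Γ] [MeasurableSpace Ω] (μ : Measure Γ)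
    (P : Measure Ω) [IsProbabilityMeasure μ] [IsProbabilityMeasure P]
    (c : Γ → ℤ) (d : Ω → ℤ) (hc : Measurable c) (hd : Measurable d)
    (h : μ.map c = P.map d) :
    ∃ ν : Measure (Γ × Ω), IsProbabilityMeasure ν ∧ ν.map Prod.fst = μ ∧ ν.map Prod.snd = P ∧
      (∀ᵐ x ∂ν, c x.1 = d x.2) ∧
      ∀ (v : ℤ) (s : Set Γ) (t : Set Ω), MeasurableSet s → MeasurableSet t → s ⊆ c ⁻¹' {v} →
        ν (s ×ˢ t) * P (d ⁻¹' {v}) = μ s * P (d ⁻¹' {v} ∩ t) := by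
  classical
  let K : Kernel ℤ Ω := Kernel.ofFunOfCountable
    (fun v => if P (d ⁻¹' {v}) = 0 then P else ProbabilityTheory.cond P (d ⁻¹' {v}))
  have hK : ∀ v, K v = if P (d ⁻¹' {v}) = 0 then P else ProbabilityTheory.cond P (d ⁻¹' {v}) :=
    fun v => rfl
  have hmv : ∀ v, MeasurableSet (d ⁻¹' {v}) := fun v => hd (measurableSet_singleton v)
  have : IsMarkovKernel K := ⟨fun v => by
    rw [hK]
    split_ifs with h0
    · infer_instance
    · exact cond_isProbabilityMeasure h0⟩
  have hKt : ∀ v t, K v t * P (d ⁻¹' {v}) = P (d ⁻¹' {v} ∩ t) := by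
    intro v t
    rw [hK]
    split_ifs with h0
    · rw [h0, mul_zero]
      exact (measure_mono_null Set.inter_subset_left h0).symm
    · exact cond_mul_eq_inter (hmv v) t P
  have hcd : ∀ v, μ (c ⁻¹' {v}) = P (d ⁻¹' {v}) := by
    intro v
    rw [← Measure.map_apply hc (measurableSet_singleton v), h,
      Measure.map_apply hd (measurableSet_singleton v)]
  have hP : ∀ t, MeasurableSet t → ∑' v, P (d ⁻¹' {v} ∩ t) = P t := by
    intro t ht
    rw [← measure_iUnion]
    · congr 1
      ext ω
      simp
    · intro a b hab
      rw [Function.onFun, Set.disjoint_left]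
      rintro ω ⟨h1, _⟩ ⟨h2, _⟩
      exact hab (h1.symm.trans h2)
    · exact fun v => (hmv v).inter ht
  have hv : ∀ (v : ℤ) (s : Set Γ) (t : Set Ω), MeasurableSet s → MeasurableSet t → s ⊆ c ⁻¹' {v} →
      (μ ⊗ₘ (K.comap c hc)) (s ×ˢ t) = μ s * K v t := by
    intro v s t hs ht hsv
    rw [Measure.compProd_apply_prod hs ht, setLIntegral_congr_fun (g := fun _ => K v t) hs]
    · rw [setLIntegral_const, mul_comm]
    · intro x hx
      have : c x = v := hsv hx
      simp [Kernel.comap_apply, this]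
  refine ⟨μ ⊗ₘ (K.comap c hc), inferInstance, ?_, ?_, ?_, ?_⟩
  · exact Measure.fst_compProd μ _
  · ext t ht
    rw [Measure.map_apply measurable_snd ht, ← Set.univ_prod,
      Measure.compProd_apply_prod MeasurableSet.univ ht, setLIntegral_univ]
    simp only [Kernel.comap_apply]
    rw [← lintegral_map (f := fun v => K v t) (K.measurable_coe ht) hc, h, lintegral_countable',
      ← hP t ht]
    congr 1
    ext v
    rw [Measure.map_apply hd (measurableSet_singleton v), hKt]
  · rw [ae_iff]
    have : {x : Γ × Ω | ¬ c x.1 = d x.2} ⊆ ⋃ v : ℤ, (c ⁻¹' {v}) ×ˢ (d ⁻¹' {v})ᶜ := by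
      intro x hx
      simp only [Set.mem_iUnion]
      exact ⟨c x.1, rfl, fun h => hx h.symm⟩
    refine measure_mono_null this (measure_iUnion_null fun v => ?_)
    rw [hv v _ _ (hc (measurableSet_singleton v)) (hmv v).compl subset_rfl, hcd, mul_comm, hKt]
    simp
  · intro v s t hs ht hsv
    rw [hv v s t hs ht hsv, mul_assoc, hKt]

lemma indep_of {Ω' S T : Type} [MeasurableSpace Ω'] [MeasurableSpace S] [MeasurableSpace T]
    (μ : Measure Ω') [IsProbabilityMeasure μ] (E : Set Ω') (hE : MeasurableSet E)
    (f : Ω' → S) (g : Ω' → T) (C : ENNReal) (hC : C ≠ 0)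
    (hC' : C ≠ ⊤)
    (ρ : Set T → ENNReal) (hμE : μ E ≠ 0)
    (h : ∀ s t, MeasurableSet s → MeasurableSet t →
      μ (E ∩ (f ⁻¹' s ∩ g ⁻¹' t)) * C = μ (E ∩ f ⁻¹' s) * ρ t) :
    IndepFun f g (ProbabilityTheory.cond μ E) := by
  rw [indepFun_iff_measure_inter_preimage_eq_mul]
  intro s t hs ht
  rw [cond_apply hE, cond_apply hE, cond_apply hE]
  have h1 := h s t hs ht
  have h2 := h Set.univ t MeasurableSet.univ ht
  simp only [Set.preimage_univ, Set.univ_inter, Set.inter_univ] at h2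
  have h3 : μ (E ∩ (f ⁻¹' s ∩ g ⁻¹' t)) * μ E = μ (E ∩ f ⁻¹' s) * μ (E ∩ g ⁻¹' t) := by
    have : (μ (E ∩ (f ⁻¹' s ∩ g ⁻¹' t)) * μ E) * C = (μ (E ∩ f ⁻¹' s) * μ (E ∩ g ⁻¹' t)) * C := by
      calc _ = (μ (E ∩ (f ⁻¹' s ∩ g ⁻¹' t)) * C) * μ E := by ring
        _ = μ (E ∩ f ⁻¹' s) * (μ E * ρ t) := by rw [h1]; ring
        _ = _ := by rw [← h2]; ring
    exact (ENNReal.mul_left_inj hC hC').1 this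
  have h4 : μ E ≠ ⊤ := measure_ne_top _ _
  calc (μ E)⁻¹ * μ (E ∩ (f ⁻¹' s ∩ g ⁻¹' t))
      = (μ E)⁻¹ * μ (E ∩ (f ⁻¹' s ∩ g ⁻¹' t)) * (μ E * (μ E)⁻¹) := by
        rw [ENNReal.mul_inv_cancel hμE h4, mul_one]
    _ = (μ E)⁻¹ * (μ (E ∩ (f ⁻¹' s ∩ g ⁻¹' t)) * μ E) * (μ E)⁻¹ := by ring
    _ = _ := by rw [h3]; ring

lemma finite_range_Dn {Ω : Type*} (n : ℕ) (Z : Ω → ℝ) (C : ℝ) (h : ∀ ω, |Z ω| ≤ C) :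
    (Set.range (fun ω => Dn n (Z ω))).Finite := by
  have h2 : (0:ℝ) < 2 ^ n := by positivity
  refine ((Set.finite_Icc (⌊2 ^ n * (-C)⌋) (⌊2 ^ n * C⌋)).image
    (fun m : ℤ => (m : ℝ) / 2 ^ n)).subset ?_
  rintro _ ⟨ω, rfl⟩
  have := abs_le.1 (h ω)
  exact ⟨⌊2 ^ n * Z ω⌋, ⟨Int.floor_le_floor (by nlinarith), Int.floor_le_floor (by nlinarith)⟩, rfl⟩

lemma finite_range_pair {Ω S T : Type*} {f : Ω → S} {g : Ω → T} (hf : (Set.range f).Finite)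
    (hg : (Set.range g).Finite) : (Set.range (fun ω => (f ω, g ω))).Finite := by
  refine (hf.prod hg).subset ?_
  rintro _ ⟨ω, rfl⟩
  exact ⟨⟨ω, rfl⟩, ⟨ω, rfl⟩⟩

lemma measurable_Dn (n : ℕ) : Measurable (Dn n) := by
  unfold Dn
  fun_prop

lemma Dn_eq_iff (n : ℕ) (x y : ℝ) : Dn n x = Dn n y ↔ ⌊(2:ℝ) ^ n * x⌋ = ⌊(2:ℝ) ^ n * y⌋ := by
  unfold Dn
  have h2 : (2:ℝ) ^ n ≠ 0 := by positivity
  rw [div_left_inj' h2]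
  exact Int.cast_inj

lemma abs_sub_of_Dn_eq {n : ℕ} {x y : ℝ} (h : Dn n x = Dn n y) : |x - y| ≤ 1 / 2 ^ n := by
  have h2 : (0:ℝ) < 2 ^ n := by positivity
  rw [Dn_eq_iff] at h
  have := (Int.abs_sub_lt_one_of_floor_eq_floor h).le
  rw [← mul_sub, abs_mul, abs_of_pos h2] at this
  rw [le_div_iff₀ h2]
  linarith

open Classical in
lemma HF_card' {ι T U : Type*} [Fintype ι] {w : ι → ℝ} (hw : ∀ i, 0 < w i) (h1 : ∑ i, w i = 1)
    (F : ι → T) (Z : ι → U) (M : ℝ) (hM : 0 < M)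
    (hc : ∀ s : Finset ι, (∀ i ∈ s, ∀ k ∈ s, Z i = Z k) → ((s.image F).card : ℝ) ≤ M) :
    HF w (fun i => (F i, Z i)) ≤ HF w Z + Real.logb 2 M := by
  apply HF_card hw h1 F Z M hM
  intro j
  apply hc
  intro i hi k hk
  exact (Finset.mem_filter.1 hi).2.trans (Finset.mem_filter.1 hk).2.symm

lemma card_pieces {ι : Type*} (n : ℕ) (s : Finset ι) (z : ι → ℝ) (f : ℝ → ℝ) (D : Set ℝ) (κ : ℝ)
    (L : ℕ) (hκ : 2 ≤ κ) (hf : WeaklyBiLipschitzOn f D κ L) (B : ℝ) (hB : 0 ≤ B)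
    (hz : ∀ i, z i ∈ D) (F : ι → ℝ) (hF : ∀ i ∈ s, F i = Dn n (z i))
    (h : ∀ i ∈ s, ∀ j ∈ s, |f (z i) - f (z j)| ≤ B / 2 ^ n) :
    open Classical in ((s.image F).card : ℝ) ≤ L * (2 * (κ * B) + 3) := by
  classical
  obtain ⟨_, R, hR, hR2⟩ := hf
  have hsub : s.image F ⊆ (Finset.univ : Finset (Fin L)).biUnion
      (fun l => (s.filter (fun i => z i ∈ R l)).image F) := by
    intro v hv
    obtain ⟨i, hi, rfl⟩ := Finset.mem_image.1 hv
    obtain ⟨l, hl⟩ := Set.mem_iUnion.1 (hR (hz i))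
    exact Finset.mem_biUnion.2 ⟨l, Finset.mem_univ _, Finset.mem_image.2 ⟨i, by simp [hi, hl], rfl⟩⟩
  have h1 : ((s.image F).card : ℝ) ≤
      ∑ l : Fin L, (((s.filter (fun i => z i ∈ R l)).image F).card : ℝ) := by
    exact_mod_cast (Finset.card_le_card hsub).trans Finset.card_biUnion_le
  have h2 : ∑ l : Fin L, (((s.filter (fun i => z i ∈ R l)).image F).card : ℝ) ≤
      ∑ l : Fin L, (2 * (κ * B) + 3) := by
    apply Finset.sum_le_sum
    intro l _
    have := card_Dn n (s.filter (fun i => z i ∈ R l)) z (κ * B) (by positivity) F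
      (fun i hi => hF i (Finset.mem_filter.1 hi).1) ?_
    · refine le_trans (le_of_eq ?_) this
      congr!
    · intro i hi j hj
      rw [Finset.mem_filter] at hi hj
      refine (hR2 l _ ⟨hz i, hi.2⟩ _ ⟨hz j, hj.2⟩).trans ?_
      rw [mul_div_assoc]
      exact mul_le_mul_of_nonneg_left (h i hi.1 j hj.1) (by linarith)
  refine le_trans (le_of_eq ?_) ((h1.trans h2).trans (le_of_eq (by rw [Finset.sum_const]; simp; ring)))
  congr!

lemma main_bound {ι : Type*} [Fintype ι] {w : ι → ℝ} (hw : ∀ i, 0 < w i) (hw1 : ∑ i, w i = 1)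
    (n L : ℕ) (κ : ℝ) (hκ : 2 ≤ κ) (f g : ℝ → ℝ) (D E : Set ℝ)
    (hf : WeaklyBiLipschitzOn f D κ L) (hg : WeaklyBiLipschitzOn g E κ L)
    (x1 x2 x3 y1 y2 y3 : ι → ℝ)
    (hx1 : ∀ i, x1 i ∈ D) (hx2 : ∀ i, x2 i ∈ D) (hx3 : ∀ i, x3 i ∈ D)
    (hy1 : ∀ i, y1 i ∈ E) (hy2 : ∀ i, y2 i ∈ E) (hy3 : ∀ i, y3 i ∈ E)
    (hx : ∀ i, Dn n (x1 i) = Dn n (x3 i)) (hy : ∀ i, Dn n (y1 i) = Dn n (y2 i)) :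
    HF w (fun i => Dn n (f (x2 i) + g (y3 i))) +
      HF w (fun i => (Dn n (x1 i), Dn n (y1 i), Dn n (x2 i), Dn n (y3 i))) ≤
    HF w (fun i => Dn n (f (x1 i) + g (y1 i))) + HF w (fun i => Dn n (f (x2 i) + g (y2 i))) +
      HF w (fun i => Dn n (f (x3 i) + g (y3 i))) + HF w (fun i => Dn n (x2 i)) +
      HF w (fun i => Dn n (y3 i)) + 4 * Real.logb 2 (16 * (L + 1) * κ ^ 2) := by
  classical
  set t := fun i => Dn n (f (x2 i) + g (y3 i)) with ht
  set s1 := fun i => Dn n (f (x1 i) + g (y1 i)) with hs1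
  set s2 := fun i => Dn n (f (x2 i) + g (y2 i)) with hs2
  set s3 := fun i => Dn n (f (x3 i) + g (y3 i)) with hs3
  set a1 := fun i => Dn n (x1 i) with ha1
  set b1 := fun i => Dn n (y1 i) with hb1
  set a2 := fun i => Dn n (x2 i) with ha2
  set b3 := fun i => Dn n (y3 i) with hb3
  set M : ℝ := 16 * (L + 1) * κ ^ 2 with hM
  have hL : (0:ℝ) ≤ L := Nat.cast_nonneg L
  have hMpos : 0 < M := by positivity
  have h2n : (0:ℝ) < 2 ^ n := by positivity
  have h2n' : (0:ℝ) ≤ 1 / 2 ^ n := by positivity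
  have hκ2 : 4 ≤ κ ^ 2 := by nlinarith
  have hML : 16 * κ ^ 2 ≤ M := by rw [hM]; nlinarith [mul_nonneg hL (sq_nonneg κ)]
  have hM1 : 2 * (4 * κ + 3) + 3 ≤ M := by nlinarith
  have hM2 : 2 * (2 * κ) + 3 ≤ M := by nlinarith
  have hM3 : L * (2 * (κ * (1 + κ)) + 3) ≤ M := by
    have : 2 * (κ * (1 + κ)) + 3 ≤ 16 * κ ^ 2 := by nlinarith
    have := mul_le_mul_of_nonneg_left this hL
    rw [hM]; nlinarith
  -- closeness of images
  have lf : ∀ x ∈ D, ∀ y ∈ D, Dn n x = Dn n y → |f x - f y| ≤ κ * (1 / 2 ^ n) := by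
    intro x hx y hy h
    exact (hf.1 x hx y hy).trans (mul_le_mul_of_nonneg_left (abs_sub_of_Dn_eq h) (by linarith))
  have lg : ∀ x ∈ E, ∀ y ∈ E, Dn n x = Dn n y → |g x - g y| ≤ κ * (1 / 2 ^ n) := by
    intro x hx y hy h
    exact (hg.1 x hx y hy).trans (mul_le_mul_of_nonneg_left (abs_sub_of_Dn_eq h) (by linarith))
  -- the four conditional entropy bounds
  have c1 : HF w (fun i => (t i, (s1 i, s2 i, s3 i))) ≤ HF w (fun i => (s1 i, s2 i, s3 i)) + Real.logb 2 M := by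
    apply HF_card' hw hw1 _ _ M hMpos
    intro s hs
    refine le_trans ?_ hM1
    refine le_trans (le_of_eq ?_) (card_Dn n s (fun i => f (x2 i) + g (y3 i)) (4 * κ + 3)
      (by linarith) t (fun i _ => rfl) ?_)
    · congr!
    · intro i hi k hk
      have e1 := hs i hi k hk
      simp only [Prod.mk.injEq] at e1
      have q1 := abs_sub_of_Dn_eq e1.1
      have q2 := abs_sub_of_Dn_eq e1.2.1
      have q3 := abs_sub_of_Dn_eq e1.2.2
      have q4 := lf _ (hx1 i) _ (hx3 i) (hx i)
      have q5 := lf _ (hx1 k) _ (hx3 k) (hx k)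
      have q6 := lg _ (hy1 i) _ (hy2 i) (hy i)
      have q7 := lg _ (hy1 k) _ (hy2 k) (hy k)
      rw [abs_le] at *
      have : (4 * κ + 3) / 2 ^ n = 4 * (κ * (1 / 2 ^ n)) + 3 * (1 / 2 ^ n) := by ring
      rw [this]
      constructor <;> linarith
  have c2 : HF w (fun i => (t i, (a2 i, b3 i))) ≤ HF w (fun i => (a2 i, b3 i)) + Real.logb 2 M := by
    apply HF_card' hw hw1 _ _ M hMpos
    intro s hs
    refine le_trans ?_ hM2
    refine le_trans (le_of_eq ?_) (card_Dn n s (fun i => f (x2 i) + g (y3 i)) (2 * κ)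
      (by linarith) t (fun i _ => rfl) ?_)
    · congr!
    · intro i hi k hk
      have e1 := hs i hi k hk
      simp only [Prod.mk.injEq] at e1
      have q1 := lf _ (hx2 i) _ (hx2 k) e1.1
      have q2 := lg _ (hy3 i) _ (hy3 k) e1.2
      rw [abs_le] at *
      have : (2 * κ) / 2 ^ n = 2 * (κ * (1 / 2 ^ n)) := by ring
      rw [this]
      constructor <;> linarith
  set A := fun i => (s1 i, s2 i, s3 i) with hA
  set C := fun i => (a2 i, b3 i) with hC
  set V := fun i => (A i, C i) with hV
  have c3 : HF w (fun i => (b1 i, V i)) ≤ HF w V + Real.logb 2 M := by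
    apply HF_card' hw hw1 _ _ M hMpos
    intro s hs
    refine le_trans ?_ hM3
    refine le_trans (le_of_eq ?_) (card_pieces n s y2 g E κ L hκ hg (1 + κ) (by linarith) hy2 b1
      (fun i _ => hy i) ?_)
    · congr!
    · intro i hi k hk
      have e1 := hs i hi k hk
      simp only [hV, hA, hC, Prod.mk.injEq] at e1
      have q1 := lf _ (hx2 i) _ (hx2 k) e1.2.1
      have q2 := abs_sub_of_Dn_eq e1.1.2.1
      rw [abs_le] at *
      have : (1 + κ) / 2 ^ n = 1 / 2 ^ n + (κ * (1 / 2 ^ n)) := by ring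
      rw [this]
      constructor <;> linarith
  have c4 : HF w (fun i => (a1 i, (b1 i, V i))) ≤ HF w (fun i => (b1 i, V i)) + Real.logb 2 M := by
    apply HF_card' hw hw1 _ _ M hMpos
    intro s hs
    refine le_trans ?_ hM3
    refine le_trans (le_of_eq ?_) (card_pieces n s x3 f D κ L hκ hf (1 + κ) (by linarith) hx3 a1
      (fun i _ => hx i) ?_)
    · congr!
    · intro i hi k hk
      have e1 := hs i hi k hk
      simp only [hV, hA, hC, Prod.mk.injEq] at e1
      have q1 := lg _ (hy3 i) _ (hy3 k) e1.2.2.2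
      have q2 := abs_sub_of_Dn_eq e1.2.1.2.2
      rw [abs_le] at *
      have : (1 + κ) / 2 ^ n = 1 / 2 ^ n + (κ * (1 / 2 ^ n)) := by ring
      rw [this]
      constructor <;> linarith
  -- combine
  have d1 := HF_submod hw hw1 A C t
  have d2 : HF w V ≤ HF w (fun i => (A i, C i, t i)) := HF_mono hw (by simp +contextual [hV])
  have d3 : HF w (fun i => (a1 i, b1 i, a2 i, b3 i)) ≤ HF w (fun i => (a1 i, (b1 i, V i))) :=
    HF_mono hw (by simp +contextual [hV, hC])
  have d4 : HF w (fun i => (A i, t i)) ≤ HF w (fun i => (t i, A i)) := HF_mono hw (by simp +contextual)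
  have d5 : HF w (fun i => (C i, t i)) ≤ HF w (fun i => (t i, C i)) := HF_mono hw (by simp +contextual)
  have d6 : HF w C ≤ HF w a2 + HF w b3 := HF_add hw hw1 a2 b3
  have d7 : HF w A ≤ HF w s1 + HF w (fun i => (s2 i, s3 i)) := HF_add hw hw1 s1 _
  have d8 := HF_add hw hw1 s2 s3
  linarith

lemma construct {Ω : Type} [MeasurableSpace Ω] (P : Measure Ω) [IsProbabilityMeasure P] (n : ℕ)
    (X Y : Ω → ℝ) (hX : Measurable X) (hY : Measurable Y) :
    ∃ P' : Measure ((Ω × Ω) × Ω), IsProbabilityMeasure P' ∧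
      P'.map (fun ω => ω.1.1) = P ∧ P'.map (fun ω => ω.1.2) = P ∧ P'.map (fun ω => ω.2) = P ∧
      (∀ᵐ ω ∂P', Dn n (X ω.1.1) = Dn n (X ω.2) ∧ Dn n (Y ω.1.1) = Dn n (Y ω.1.2)) ∧
      (∀ (u : ℝ) (C : Set (Ω × Ω)) (B : Set Ω), MeasurableSet C → MeasurableSet B →
        (∀ x ∈ C, Dn n (X x.1) = u) →
        P' (C ×ˢ B) * P {ω | Dn n (X ω) = u} =
          P' (C ×ˢ Set.univ) * P ({ω | Dn n (X ω) = u} ∩ B)) ∧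
      (∀ (u : ℝ) (s t : Set Ω), MeasurableSet s → MeasurableSet t →
        (∀ x ∈ s, Dn n (Y x) = u) →
        P' ((s ×ˢ t) ×ˢ Set.univ) * P {ω | Dn n (Y ω) = u} =
          P s * P ({ω | Dn n (Y ω) = u} ∩ t)) := by
  set a : Ω → ℤ := fun ω => ⌊(2:ℝ) ^ n * X ω⌋ with ha
  set b : Ω → ℤ := fun ω => ⌊(2:ℝ) ^ n * Y ω⌋ with hb
  have hma : Measurable a := by fun_prop
  have hmb : Measurable b := by fun_prop
  obtain ⟨P1, hP1, f1, f2, f3, f4⟩ := exists_ext P P b b hmb hmb rfl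
  have hc2 : P1.map (fun x => a x.1) = P.map a := by
    conv_rhs => rw [← f1]
    rw [Measure.map_map hma measurable_fst]
    rfl
  obtain ⟨P2, hP2, g1, g2, g3, g4⟩ := exists_ext P1 P (fun x => a x.1) a
    (hma.comp measurable_fst) hma hc2
  have hfst : ∀ C, MeasurableSet C → P2 (C ×ˢ Set.univ) = P1 C := by
    intro C hC
    rw [← g1, Measure.map_apply measurable_fst hC, Set.prod_univ]
  refine ⟨P2, hP2, ?_, ?_, g2, ?_, ?_, ?_⟩
  · rw [← f1, ← g1, Measure.map_map measurable_fst measurable_fst]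
    rfl
  · conv_rhs => rw [← f2, ← g1, Measure.map_map measurable_snd measurable_fst]
    rfl
  · have f3' : ∀ᵐ ω ∂P2, b ω.1.1 = b ω.1.2 := by
      rw [← g1] at f3
      exact ae_of_ae_map measurable_fst.aemeasurable f3
    filter_upwards [g3, f3'] with ω h1 h2
    exact ⟨(Dn_eq_iff _ _ _).2 h1, (Dn_eq_iff _ _ _).2 h2⟩
  · intro u C B hC hB hu
    rcases C.eq_empty_or_nonempty with rfl | ⟨x0, hx0⟩
    · simp
    · have e : {ω | Dn n (X ω) = u} = a ⁻¹' {a x0.1} := by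
        ext ω
        rw [← hu x0 hx0]
        exact Dn_eq_iff _ _ _
      rw [hfst C hC, e]
      refine g4 _ C B hC hB ?_
      intro x hx
      exact (Dn_eq_iff _ _ _).1 ((hu x hx).trans (hu x0 hx0).symm)
  · intro u s t hs ht hu
    rcases s.eq_empty_or_nonempty with rfl | ⟨x0, hx0⟩
    · simp
    · have e : {ω | Dn n (Y ω) = u} = b ⁻¹' {b x0} := by
        ext ω
        rw [← hu x0 hx0]
        exact Dn_eq_iff _ _ _
      rw [hfst _ (hs.prod ht), e]
      refine f4 _ s t hs ht ?_
      intro x hx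
      exact (Dn_eq_iff _ _ _).1 ((hu x hx).trans (hu x0 hx0).symm)

lemma map_cond_eq {Ω' : Type} [MeasurableSpace Ω'] (μ : Measure Ω') (E : Set Ω')
    (hE : MeasurableSet E) (f g : Ω' → ℝ) (hf : Measurable f) (hg : Measurable g)
    (h : ∀ t, MeasurableSet t → μ (E ∩ f ⁻¹' t) = μ (E ∩ g ⁻¹' t)) :
    Measure.map f (ProbabilityTheory.cond μ E) = Measure.map g (ProbabilityTheory.cond μ E) := by
  ext t ht
  rw [Measure.map_apply hf ht, Measure.map_apply hg ht, cond_apply hE, cond_apply hE, h t ht]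

/-- An entropy identity from a product identity of fiber masses. -/
lemma HF_logs {ι : Type*} [Fintype ι] {w : ι → ℝ} (hw : ∀ i, 0 < w i) {T1 T2 T3 T4 : Type*}
    (F1 : ι → T1) (F2 : ι → T2) (F3 : ι → T3) (F4 : ι → T4)
    (h : ∀ i, prF w F1 i * prF w F2 i = prF w F3 i * prF w F4 i) :
    HF w F1 + HF w F2 = HF w F3 + HF w F4 := by
  unfold HF
  rw [← Finset.sum_add_distrib, ← Finset.sum_add_distrib]
  apply Finset.sum_congr rfl
  intro i _
  have h1 := congrArg (Real.logb 2) (h i)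
  rw [Real.logb_mul (prF_pos hw _ i).ne' (prF_pos hw _ i).ne',
    Real.logb_mul (prF_pos hw _ i).ne' (prF_pos hw _ i).ne'] at h1
  linear_combination (-w i) * h1

lemma entropy_facts {Ω : Type} [MeasurableSpace Ω] (P : Measure Ω) [IsProbabilityMeasure P] (n : ℕ)
    (X Y : Ω → ℝ) (hX : Measurable X) (hY : Measurable Y) (c : ℝ)
    (hc : ∀ ω, |X ω| ≤ c ∧ |Y ω| ≤ c)
    (P' : Measure ((Ω × Ω) × Ω)) [IsProbabilityMeasure P']
    (m1 : P'.map (fun ω => ω.1.1) = P) (m2 : P'.map (fun ω => ω.1.2) = P)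
    (m3 : P'.map (fun ω => ω.2) = P)
    (hae : ∀ᵐ ω ∂P', Dn n (X ω.1.1) = Dn n (X ω.2) ∧ Dn n (Y ω.1.1) = Dn n (Y ω.1.2))
    (F2 : ∀ (u : ℝ) (C : Set (Ω × Ω)) (B : Set Ω), MeasurableSet C → MeasurableSet B →
        (∀ x ∈ C, Dn n (X x.1) = u) →
        P' (C ×ˢ B) * P {ω | Dn n (X ω) = u} =
          P' (C ×ˢ Set.univ) * P ({ω | Dn n (X ω) = u} ∩ B))
    (F1 : ∀ (u : ℝ) (s t : Set Ω), MeasurableSet s → MeasurableSet t →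
        (∀ x ∈ s, Dn n (Y x) = u) →
        P' ((s ×ˢ t) ×ˢ Set.univ) * P {ω | Dn n (Y ω) = u} =
          P s * P ({ω | Dn n (Y ω) = u} ∩ t)) :
    Hn2 P n X Y ≤ Hn P n X + Hn P n Y ∧
    entOf P' (fun ω => (Dn n (X ω.1.1), Dn n (Y ω.1.1))) = Hn2 P n X Y ∧
    entOf P' (fun ω => (Dn n (X ω.1.2), (Dn n (X ω.1.1), Dn n (Y ω.1.1)))) + Hn P n Y =
      2 * Hn2 P n X Y ∧
    entOf P' (fun ω => (Dn n (Y ω.2), (Dn n (X ω.1.1), Dn n (Y ω.1.1)))) + Hn P n X =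
      2 * Hn2 P n X Y ∧
    entOf P' (fun ω => (Dn n (X ω.1.1), Dn n (Y ω.1.1), Dn n (X ω.1.2), Dn n (Y ω.2))) +
      Hn P n X + Hn P n Y = 3 * Hn2 P n X Y := by
  have hDX : Measurable (fun ω => Dn n (X ω)) := (measurable_Dn n).comp hX
  have hDY : Measurable (fun ω => Dn n (Y ω)) := (measurable_Dn n).comp hY
  have p1 : Measurable (fun ω : (Ω × Ω) × Ω => ω.1.1) := by fun_prop
  have p2 : Measurable (fun ω : (Ω × Ω) × Ω => ω.1.2) := by fun_prop
  have p3 : Measurable (fun ω : (Ω × Ω) × Ω => ω.2) := by fun_prop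
  have hsX : ∀ u, MeasurableSet {ω | Dn n (X ω) = u} := fun u => hDX (measurableSet_singleton u)
  have hsY : ∀ u, MeasurableSet {ω | Dn n (Y ω) = u} := fun u => hDY (measurableSet_singleton u)
  have rX := finite_range_Dn n X c (fun ω => (hc ω).1)
  have rY := finite_range_Dn n Y c (fun ω => (hc ω).2)
  have lX1 : entOf P' (fun ω => Dn n (X ω.1.1)) = Hn P n X := entOf_map p1 m1 hDX
  have lY1 : entOf P' (fun ω => Dn n (Y ω.1.1)) = Hn P n Y := entOf_map p1 m1 hDY
  have l11 : entOf P' (fun ω => (Dn n (X ω.1.1), Dn n (Y ω.1.1))) = Hn2 P n X Y :=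
    entOf_map p1 m1 (hDX.prodMk hDY)
  have l21 : entOf P' (fun ω => (Dn n (X ω.1.2), Dn n (Y ω.1.1))) = Hn2 P n X Y := by
    refine Eq.trans (entOf_congr ?_) (entOf_map p2 m2 (hDX.prodMk hDY))
    filter_upwards [hae] with ω h
    rw [h.2]
  have l13 : entOf P' (fun ω => (Dn n (X ω.1.1), Dn n (Y ω.2))) = Hn2 P n X Y := by
    refine Eq.trans (entOf_congr ?_) (entOf_map p3 m3 (hDX.prodMk hDY))
    filter_upwards [hae] with ω h
    rw [h.1]
  -- masses
  have hXY : ∀ u v, MeasurableSet {ω | Dn n (X ω) = u ∧ Dn n (Y ω) = v} :=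
    fun u v => (hsX u).inter (hsY v)
  have t1 : ∀ s, MeasurableSet s → P' ((fun ω => ω.1.1) ⁻¹' s) = P s := fun s hs => by
    rw [← Measure.map_apply p1 hs, m1]
  have t2 : ∀ s, MeasurableSet s → P' ((fun ω => ω.1.2) ⁻¹' s) = P s := fun s hs => by
    rw [← Measure.map_apply p2 hs, m2]
  have t3 : ∀ s, MeasurableSet s → P' ((fun ω => ω.2) ⁻¹' s) = P s := fun s hs => by
    rw [← Measure.map_apply p3 hs, m3]
  have qX1 : ∀ u, P' {ω | Dn n (X ω.1.1) = u} = P {ω | Dn n (X ω) = u} :=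
    fun u => t1 _ (hsX u)
  have qY1 : ∀ u, P' {ω | Dn n (Y ω.1.1) = u} = P {ω | Dn n (Y ω) = u} :=
    fun u => t1 _ (hsY u)
  have q11 : ∀ u v, P' {ω | Dn n (X ω.1.1) = u ∧ Dn n (Y ω.1.1) = v} =
      P {ω | Dn n (X ω) = u ∧ Dn n (Y ω) = v} := fun u v => t1 _ (hXY u v)
  have q21 : ∀ u v, P' {ω | Dn n (X ω.1.2) = u ∧ Dn n (Y ω.1.1) = v} =
      P {ω | Dn n (X ω) = u ∧ Dn n (Y ω) = v} := by
    intro u v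
    rw [← t2 _ (hXY u v)]
    apply measure_congr
    filter_upwards [hae] with ω h
    simp only [eq_iff_iff]
    change (_ ∧ _) ↔ (_ ∧ _)
    rw [h.2]
  have q13 : ∀ u v, P' {ω | Dn n (X ω.1.1) = u ∧ Dn n (Y ω.2) = v} =
      P {ω | Dn n (X ω) = u ∧ Dn n (Y ω) = v} := by
    intro u v
    rw [← t3 _ (hXY u v)]
    apply measure_congr
    filter_upwards [hae] with ω h
    simp only [eq_iff_iff]
    change (_ ∧ _) ↔ (_ ∧ _)
    rw [h.1]
  have M1 : ∀ x u v, P' {ω | (Dn n (X ω.1.2), (Dn n (X ω.1.1), Dn n (Y ω.1.1))) = (x, (u, v))} *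
      P' {ω | Dn n (Y ω.1.1) = v} = P' {ω | (Dn n (X ω.1.2), Dn n (Y ω.1.1)) = (x, v)} *
        P' {ω | (Dn n (X ω.1.1), Dn n (Y ω.1.1)) = (u, v)} := by
    intro x u v
    have := F1 v {ω | Dn n (X ω) = u ∧ Dn n (Y ω) = v} {ω | Dn n (X ω) = x}
      ((hsX u).inter (hsY v)) (hsX x) (fun _ h => h.2)
    simp only [Prod.mk.injEq]
    rw [qY1, q21, q11, mul_comm (P _) (P _)]
    convert this using 2
    · congr 1; ext ω; simp; tauto
    · congr 1; ext ω; simp; tauto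
  have M2 : ∀ y u v, P' {ω | (Dn n (Y ω.2), (Dn n (X ω.1.1), Dn n (Y ω.1.1))) = (y, (u, v))} *
      P' {ω | Dn n (X ω.1.1) = u} = P' {ω | (Dn n (X ω.1.1), Dn n (Y ω.2)) = (u, y)} *
        P' {ω | (Dn n (X ω.1.1), Dn n (Y ω.1.1)) = (u, v)} := by
    intro y u v
    have := F2 u {ω | Dn n (X ω.1) = u ∧ Dn n (Y ω.1) = v} {ω | Dn n (Y ω) = y}
      (measurable_fst ((hsX u).inter (hsY v))) (hsY y) (fun _ h => h.1)
    simp only [Prod.mk.injEq]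
    rw [qX1, q13, mul_comm (P _) (P' _)]
    convert this using 2
    · congr 1; ext ω; simp; tauto
    · congr 1; ext ω; simp
    · rfl
  have M3 : ∀ u v x y, P' {ω | (Dn n (X ω.1.1), Dn n (Y ω.1.1), Dn n (X ω.1.2), Dn n (Y ω.2)) = (u, v, x, y)} *
      P' {ω | Dn n (X ω.1.1) = u} = P' {ω | (Dn n (X ω.1.1), Dn n (Y ω.2)) = (u, y)} *
        P' {ω | (Dn n (X ω.1.2), (Dn n (X ω.1.1), Dn n (Y ω.1.1))) = (x, (u, v))} := by
    intro u v x y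
    have := F2 u {ω | (Dn n (X ω.1) = u ∧ Dn n (Y ω.1) = v) ∧ Dn n (X ω.2) = x} {ω | Dn n (Y ω) = y}
      ((measurable_fst ((hsX u).inter (hsY v))).inter (measurable_snd (hsX x))) (hsY y)
      (fun _ h => h.1.1)
    simp only [Prod.mk.injEq]
    rw [qX1, q13, mul_comm (P _) (P' _)]
    convert this using 2
    · congr 1; ext ω; simp; tauto
    · congr 1; ext ω; simp; tauto
    · rfl
  -- finite representation
  obtain ⟨ι, _, w, r, hw, hw1, -, hpr, hent⟩ := exists_rep P'
    (fun ω => (Dn n (X ω.1.1), Dn n (Y ω.1.1), Dn n (X ω.1.2), Dn n (Y ω.2)))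
    (by
      have h1 := hDX.comp p1; have h2 := hDY.comp p1
      have h3 := hDX.comp p2; have h4 := hDY.comp p3
      exact h1.prodMk (h2.prodMk (h3.prodMk h4)))
    (finite_range_pair (rX.subset (by rintro _ ⟨ω, rfl⟩; exact ⟨_, rfl⟩))
      (finite_range_pair (rY.subset (by rintro _ ⟨ω, rfl⟩; exact ⟨_, rfl⟩))
        (finite_range_pair (rX.subset (by rintro _ ⟨ω, rfl⟩; exact ⟨_, rfl⟩))
          (rY.subset (by rintro _ ⟨ω, rfl⟩; exact ⟨_, rfl⟩)))))
    (fun _ => True) (by simp)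
  have treal : ∀ a b c d : Set ((Ω × Ω) × Ω), P' a * P' b = P' c * P' d →
      P'.real a * P'.real b = P'.real c * P'.real d := by
    intro a b c d h
    have := congrArg ENNReal.toReal h
    rwa [ENNReal.toReal_mul, ENNReal.toReal_mul] at this
  have n_a : entOf P' (fun ω => Dn n (X (ω).1.1)) =
      HF w (fun i => Dn n (X (r i).1.1)) :=
    hent _ (fun s => s.1)
  have n_b : entOf P' (fun ω => Dn n (Y (ω).1.1)) =
      HF w (fun i => Dn n (Y (r i).1.1)) :=
    hent _ (fun s => s.2.1)
  have n_ab : entOf P' (fun ω => (Dn n (X (ω).1.1), Dn n (Y (ω).1.1))) =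
      HF w (fun i => (Dn n (X (r i).1.1), Dn n (Y (r i).1.1))) :=
    hent _ (fun s => (s.1, s.2.1))
  have n_xb : entOf P' (fun ω => (Dn n (X (ω).1.2), Dn n (Y (ω).1.1))) =
      HF w (fun i => (Dn n (X (r i).1.2), Dn n (Y (r i).1.1))) :=
    hent _ (fun s => (s.2.2.1, s.2.1))
  have n_ay : entOf P' (fun ω => (Dn n (X (ω).1.1), Dn n (Y (ω).2))) =
      HF w (fun i => (Dn n (X (r i).1.1), Dn n (Y (r i).2))) :=
    hent _ (fun s => (s.1, s.2.2.2))
  have n_xab : entOf P' (fun ω => (Dn n (X (ω).1.2), Dn n (X (ω).1.1), Dn n (Y (ω).1.1))) =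
      HF w (fun i => (Dn n (X (r i).1.2), Dn n (X (r i).1.1), Dn n (Y (r i).1.1))) :=
    hent _ (fun s => (s.2.2.1, s.1, s.2.1))
  have n_yab : entOf P' (fun ω => (Dn n (Y (ω).2), Dn n (X (ω).1.1), Dn n (Y (ω).1.1))) =
      HF w (fun i => (Dn n (Y (r i).2), Dn n (X (r i).1.1), Dn n (Y (r i).1.1))) :=
    hent _ (fun s => (s.2.2.2, s.1, s.2.1))
  have n_abxy : entOf P' (fun ω => (Dn n (X (ω).1.1), Dn n (Y (ω).1.1), Dn n (X (ω).1.2), Dn n (Y (ω).2))) =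
      HF w (fun i => (Dn n (X (r i).1.1), Dn n (Y (r i).1.1), Dn n (X (r i).1.2), Dn n (Y (r i).2))) :=
    hent _ (fun s => (s.1, s.2.1, s.2.2.1, s.2.2.2))
  have e1 := HF_logs hw
    (fun i => (Dn n (X (r i).1.2), Dn n (X (r i).1.1), Dn n (Y (r i).1.1)))
    (fun i => Dn n (Y (r i).1.1))
    (fun i => (Dn n (X (r i).1.2), Dn n (Y (r i).1.1)))
    (fun i => (Dn n (X (r i).1.1), Dn n (Y (r i).1.1)))
    (fun i => (congrArg₂ (· * ·) (hpr _ (fun s => (s.2.2.1, s.1, s.2.1)) i) (hpr _ (fun s => s.2.1) i)).trans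
      ((treal _ _ _ _ (M1 _ _ _)).trans
        (congrArg₂ (· * ·) (hpr _ (fun s => (s.2.2.1, s.2.1)) i) (hpr _ (fun s => (s.1, s.2.1)) i)).symm))
  rw [← n_xab, ← n_b, ← n_xb, ← n_ab] at e1
  have e2 := HF_logs hw
    (fun i => (Dn n (Y (r i).2), Dn n (X (r i).1.1), Dn n (Y (r i).1.1)))
    (fun i => Dn n (X (r i).1.1))
    (fun i => (Dn n (X (r i).1.1), Dn n (Y (r i).2)))
    (fun i => (Dn n (X (r i).1.1), Dn n (Y (r i).1.1)))
    (fun i => (congrArg₂ (· * ·) (hpr _ (fun s => (s.2.2.2, s.1, s.2.1)) i) (hpr _ (fun s => s.1) i)).trans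
      ((treal _ _ _ _ (M2 _ _ _)).trans
        (congrArg₂ (· * ·) (hpr _ (fun s => (s.1, s.2.2.2)) i) (hpr _ (fun s => (s.1, s.2.1)) i)).symm))
  rw [← n_yab, ← n_a, ← n_ay, ← n_ab] at e2
  have e3 := HF_logs hw
    (fun i => (Dn n (X (r i).1.1), Dn n (Y (r i).1.1), Dn n (X (r i).1.2), Dn n (Y (r i).2)))
    (fun i => Dn n (X (r i).1.1))
    (fun i => (Dn n (X (r i).1.1), Dn n (Y (r i).2)))
    (fun i => (Dn n (X (r i).1.2), Dn n (X (r i).1.1), Dn n (Y (r i).1.1)))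
    (fun i => (congrArg₂ (· * ·) (hpr _ (fun s => (s.1, s.2.1, s.2.2.1, s.2.2.2)) i) (hpr _ (fun s => s.1) i)).trans
      ((treal _ _ _ _ (M3 _ _ _ _)).trans
        (congrArg₂ (· * ·) (hpr _ (fun s => (s.1, s.2.2.2)) i) (hpr _ (fun s => (s.2.2.1, s.1, s.2.1)) i)).symm))
  rw [← n_abxy, ← n_a, ← n_ay, ← n_xab] at e3
  have e4 := HF_add hw hw1 (fun i => Dn n (X (r i).1.1)) (fun i => Dn n (Y (r i).1.1))
  rw [← n_a, ← n_b, ← n_ab] at e4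
  rw [lX1, lY1, l11] at e4
  refine ⟨e4, l11, ?_, ?_, ?_⟩ <;> linarith

lemma cond_facts {Ω : Type} [MeasurableSpace Ω] (P : Measure Ω) [IsProbabilityMeasure P] (n : ℕ)
    (X Y : Ω → ℝ) (hX : Measurable X) (hY : Measurable Y)
    (P' : Measure ((Ω × Ω) × Ω)) [IsProbabilityMeasure P']
    (m1 : P'.map (fun ω => ω.1.1) = P) (m2 : P'.map (fun ω => ω.1.2) = P)
    (m3 : P'.map (fun ω => ω.2) = P)
    (hae : ∀ᵐ ω ∂P', Dn n (X ω.1.1) = Dn n (X ω.2) ∧ Dn n (Y ω.1.1) = Dn n (Y ω.1.2))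
    (F2 : ∀ (u : ℝ) (C : Set (Ω × Ω)) (B : Set Ω), MeasurableSet C → MeasurableSet B →
        (∀ x ∈ C, Dn n (X x.1) = u) →
        P' (C ×ˢ B) * P {ω | Dn n (X ω) = u} =
          P' (C ×ˢ Set.univ) * P ({ω | Dn n (X ω) = u} ∩ B))
    (F1 : ∀ (u : ℝ) (s t : Set Ω), MeasurableSet s → MeasurableSet t →
        (∀ x ∈ s, Dn n (Y x) = u) →
        P' ((s ×ˢ t) ×ˢ Set.univ) * P {ω | Dn n (Y ω) = u} =
          P s * P ({ω | Dn n (Y ω) = u} ∩ t)) :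
    CondIIDGiven P' (fun ω => X ω.1.1) (fun ω => X ω.1.2) (fun ω => Dn n (Y ω.1.1)) ∧
    CondIIDGiven P' (fun ω => Y ω.1.1) (fun ω => Y ω.2) (fun ω => Dn n (X ω.1.1)) ∧
    CondIndepGiven P' (fun ω => (X ω.1.2, Y ω.1.1)) (fun ω => Y ω.2)
      (fun ω => Dn n (X ω.1.1)) ∧
    CondIndepGiven P' (fun ω => X ω.1.2) (fun ω => Y ω.2)
      (fun ω => (Dn n (X ω.1.1), Dn n (Y ω.1.1))) := by
  have hDX : Measurable (fun ω => Dn n (X ω)) := (measurable_Dn n).comp hX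
  have hDY : Measurable (fun ω => Dn n (Y ω)) := (measurable_Dn n).comp hY
  have p1 : Measurable (fun ω : (Ω × Ω) × Ω => ω.1.1) := by fun_prop
  have p2 : Measurable (fun ω : (Ω × Ω) × Ω => ω.1.2) := by fun_prop
  have p3 : Measurable (fun ω : (Ω × Ω) × Ω => ω.2) := by fun_prop
  have hsX : ∀ u, MeasurableSet {ω | Dn n (X ω) = u} := fun u => hDX (measurableSet_singleton u)
  have hsY : ∀ u, MeasurableSet {ω | Dn n (Y ω) = u} := fun u => hDY (measurableSet_singleton u)
  have t1 : ∀ s, MeasurableSet s → P' ((fun ω => ω.1.1) ⁻¹' s) = P s := fun s hs => by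
    rw [← Measure.map_apply p1 hs, m1]
  have t2 : ∀ s, MeasurableSet s → P' ((fun ω => ω.1.2) ⁻¹' s) = P s := fun s hs => by
    rw [← Measure.map_apply p2 hs, m2]
  have t3 : ∀ s, MeasurableSet s → P' ((fun ω => ω.2) ⁻¹' s) = P s := fun s hs => by
    rw [← Measure.map_apply p3 hs, m3]
  have key : ∀ (S : Type) [MeasurableSpace S] (f : Ω × Ω → S) (E : Set (Ω × Ω)) (u : ℝ),
      Measurable f → MeasurableSet E → (∀ x ∈ E, Dn n (X x.1) = u) →
      P' ((fun ω => ω.1) ⁻¹' E) ≠ 0 →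
      IndepFun (fun ω => f ω.1) (fun ω => Y ω.2)
        (ProbabilityTheory.cond P' ((fun ω => ω.1) ⁻¹' E)) := by
    intro S _ f E u hf hE hu h0
    refine indep_of P' _ (measurable_fst hE) _ _ (P {ω | Dn n (X ω) = u}) ?_ (measure_ne_top _ _)
      (fun t => P ({ω | Dn n (X ω) = u} ∩ Y ⁻¹' t)) h0 ?_
    · rw [← t1 _ (hsX u)]
      intro h
      exact h0 (measure_mono_null (fun ω hω => hu _ hω) h)
    · intro s t hs ht
      have := F2 u (E ∩ f ⁻¹' s) (Y ⁻¹' t) (hE.inter (hf hs)) (hY ht) (fun x hx => hu x hx.1)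
      convert this using 3
      · ext ω; simp; tauto
      · ext ω; simp
  refine ⟨?_, ?_, ?_, ?_⟩
  · intro u hu
    have hE : MeasurableSet ((fun ω : (Ω × Ω) × Ω => Dn n (Y ω.1.1)) ⁻¹' {u}) := p1 (hsY u)
    constructor
    · refine indep_of P' _ hE _ _ (P {ω | Dn n (Y ω) = u}) ?_ (measure_ne_top _ _)
        (fun t => P ({ω | Dn n (Y ω) = u} ∩ X ⁻¹' t)) hu ?_
      · rw [← t1 _ (hsY u)]
        exact hu
      · intro s t hs ht
        have := F1 u ({ω | Dn n (Y ω) = u} ∩ X ⁻¹' s) (X ⁻¹' t) ((hsY u).inter (hX hs)) (hX ht)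
          (fun x hx => hx.1)
        rw [← t1 _ ((hsY u).inter (hX hs))] at this
        convert this using 3
        · ext ω; simp; tauto
        · rfl
    · refine map_cond_eq P' _ hE _ _ (hX.comp p1) (hX.comp p2) ?_
      intro t ht
      refine Eq.trans (t1 ({ω | Dn n (Y ω) = u} ∩ X ⁻¹' t) ((hsY u).inter (hX ht))) ?_
      rw [← t2 _ ((hsY u).inter (hX ht))]
      apply measure_congr
      filter_upwards [hae] with ω h
      simp only [eq_iff_iff]
      change (Dn n (Y ω.1.2) = u ∧ X ω.1.2 ∈ t) ↔ (Dn n (Y ω.1.1) = u ∧ X ω.1.2 ∈ t)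
      rw [h.2]
  · intro u hu
    have hE : MeasurableSet ((fun ω : (Ω × Ω) × Ω => Dn n (X ω.1.1)) ⁻¹' {u}) := p1 (hsX u)
    constructor
    · exact key ℝ (fun x => Y x.1) {x | Dn n (X x.1) = u} u (hY.comp measurable_fst)
        (measurable_fst (hsX u)) (fun _ h => h) hu
    · refine map_cond_eq P' _ hE _ _ (hY.comp p1) (hY.comp p3) ?_
      intro t ht
      refine Eq.trans (t1 ({ω | Dn n (X ω) = u} ∩ Y ⁻¹' t) ((hsX u).inter (hY ht))) ?_
      rw [← t3 _ ((hsX u).inter (hY ht))]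
      apply measure_congr
      filter_upwards [hae] with ω h
      simp only [eq_iff_iff]
      change (Dn n (X ω.2) = u ∧ Y ω.2 ∈ t) ↔ (Dn n (X ω.1.1) = u ∧ Y ω.2 ∈ t)
      rw [h.1]
  · intro u hu
    exact key (ℝ × ℝ) (fun x => (X x.2, Y x.1)) {x | Dn n (X x.1) = u} u
      ((hX.comp measurable_snd).prodMk (hY.comp measurable_fst))
      (measurable_fst (hsX u)) (fun _ h => h) hu
  · rintro ⟨u, v⟩ hu
    exact key ℝ (fun x => X x.2) {x | (Dn n (X x.1), Dn n (Y x.1)) = (u, v)} u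
      (hX.comp measurable_snd)
      (((hDX.comp measurable_fst).prodMk (hDY.comp measurable_fst))
        (measurableSet_singleton (u, v))) (fun _ h => (Prod.ext_iff.1 h).1) hu

lemma bounded_of_lip {Ω : Type} (f : ℝ → ℝ) (X : Ω → ℝ) (κ c : ℝ) (L : ℕ) (hκ : 2 ≤ κ)
    (hc : ∀ ω, |X ω| ≤ c)
    (hf : WeaklyBiLipschitzOn f (Set.range X) κ L) : ∃ C, ∀ ω, |f (X ω)| ≤ C := by
  rcases isEmpty_or_nonempty Ω with h | ⟨⟨ω0⟩⟩
  · exact ⟨0, fun ω => (h.false ω).elim⟩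
  · refine ⟨|f (X ω0)| + κ * (2 * c), fun ω => ?_⟩
    have h1 := hf.1 _ ⟨ω, rfl⟩ _ ⟨ω0, rfl⟩
    have h2 : |X ω - X ω0| ≤ 2 * c := (abs_sub _ _).trans (by linarith [hc ω, hc ω0])
    have h3 : κ * |X ω - X ω0| ≤ κ * (2 * c) := mul_le_mul_of_nonneg_left h2 (by linarith)
    have h4 := abs_sub_abs_le_abs_sub (f (X ω)) (f (X ω0))
    linarith

lemma sum_facts {Ω : Type} [MeasurableSpace Ω] (P : Measure Ω) [IsProbabilityMeasure P] (n L : ℕ)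
    (X Y : Ω → ℝ) (hX : Measurable X) (hY : Measurable Y) (c : ℝ)
    (hc : ∀ ω, |X ω| ≤ c ∧ |Y ω| ≤ c)
    (P' : Measure ((Ω × Ω) × Ω)) [IsProbabilityMeasure P']
    (m1 : P'.map (fun ω => ω.1.1) = P) (m2 : P'.map (fun ω => ω.1.2) = P)
    (m3 : P'.map (fun ω => ω.2) = P)
    (hae : ∀ᵐ ω ∂P', Dn n (X ω.1.1) = Dn n (X ω.2) ∧ Dn n (Y ω.1.1) = Dn n (Y ω.1.2))
    (κ : ℝ) (hκ : 2 ≤ κ) (f g : ℝ → ℝ) (hfm : Measurable f) (hgm : Measurable g)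
    (hf : WeaklyBiLipschitzOn f (Set.range X) κ L)
    (hg : WeaklyBiLipschitzOn g (Set.range Y) κ L) :
    entOf P' (fun ω => (Dn n (f (X ω.1.2) + g (Y ω.2)), (Dn n (X ω.1.1), Dn n (Y ω.1.1)))) +
      entOf P' (fun ω => (Dn n (X ω.1.1), Dn n (Y ω.1.1), Dn n (X ω.1.2), Dn n (Y ω.2))) ≤
    entOf P' (fun ω => (Dn n (X ω.1.1), Dn n (Y ω.1.1))) +
    3 * Hn P n (fun ω => f (X ω) + g (Y ω)) + Hn P n X + Hn P n Y +
      4 * Real.logb 2 (16 * (L + 1) * κ ^ 2) := by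
  have hDX : Measurable (fun ω => Dn n (X ω)) := (measurable_Dn n).comp hX
  have hDY : Measurable (fun ω => Dn n (Y ω)) := (measurable_Dn n).comp hY
  have p1 : Measurable (fun ω : (Ω × Ω) × Ω => ω.1.1) := by fun_prop
  have p2 : Measurable (fun ω : (Ω × Ω) × Ω => ω.1.2) := by fun_prop
  have p3 : Measurable (fun ω : (Ω × Ω) × Ω => ω.2) := by fun_prop
  obtain ⟨Cf, hCf⟩ := bounded_of_lip f X κ c L hκ (fun ω => (hc ω).1) hf
  obtain ⟨Cg, hCg⟩ := bounded_of_lip g Y κ c L hκ (fun ω => (hc ω).2) hg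
  have bS : ∀ ω ω', |f (X ω) + g (Y ω')| ≤ Cf + Cg := fun ω ω' =>
    (abs_add_le _ _).trans (add_le_add (hCf ω) (hCg ω'))
  have hS : Measurable (fun ω => Dn n (f (X ω) + g (Y ω))) :=
    (measurable_Dn n).comp ((hfm.comp hX).add (hgm.comp hY))
  have hT : Measurable (fun ω : (Ω × Ω) × Ω => Dn n (f (X ω.1.2) + g (Y ω.2))) :=
    (measurable_Dn n).comp ((hfm.comp (hX.comp p2)).add (hgm.comp (hY.comp p3)))
  have lX2 : entOf P' (fun ω => Dn n (X ω.1.2)) = Hn P n X := entOf_map p2 m2 hDX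
  have lY3 : entOf P' (fun ω => Dn n (Y ω.2)) = Hn P n Y := entOf_map p3 m3 hDY
  have ls1 : entOf P' (fun ω => Dn n (f (X ω.1.1) + g (Y ω.1.1))) =
    Hn P n (fun ω => f (X ω) + g (Y ω)) := entOf_map p1 m1 hS
  have ls2 : entOf P' (fun ω => Dn n (f (X ω.1.2) + g (Y ω.1.2))) =
    Hn P n (fun ω => f (X ω) + g (Y ω)) := entOf_map p2 m2 hS
  have ls3 : entOf P' (fun ω => Dn n (f (X ω.2) + g (Y ω.2))) =
    Hn P n (fun ω => f (X ω) + g (Y ω)) := entOf_map p3 m3 hS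
  obtain ⟨ι, _, w, r, hw, hw1, hG, hpr, hent⟩ := exists_rep P'
    (fun ω => (Dn n (X ω.1.1), Dn n (Y ω.1.1), Dn n (X ω.1.2), Dn n (Y ω.2),
      Dn n (f (X ω.1.1) + g (Y ω.1.1)), Dn n (f (X ω.1.2) + g (Y ω.1.2)),
      Dn n (f (X ω.2) + g (Y ω.2)), Dn n (f (X ω.1.2) + g (Y ω.2))))
    ((hDX.comp p1).prodMk ((hDY.comp p1).prodMk ((hDX.comp p2).prodMk ((hDY.comp p3).prodMk
      ((hS.comp p1).prodMk ((hS.comp p2).prodMk ((hS.comp p3).prodMk hT)))))))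
    (finite_range_pair (finite_range_Dn n _ c (fun ω => (hc ω.1.1).1))
      (finite_range_pair (finite_range_Dn n _ c (fun ω => (hc ω.1.1).2))
      (finite_range_pair (finite_range_Dn n _ c (fun ω => (hc ω.1.2).1))
      (finite_range_pair (finite_range_Dn n _ c (fun ω => (hc ω.2).2))
      (finite_range_pair (finite_range_Dn n _ _ (fun ω => bS ω.1.1 ω.1.1))
      (finite_range_pair (finite_range_Dn n _ _ (fun ω => bS ω.1.2 ω.1.2))
      (finite_range_pair (finite_range_Dn n _ _ (fun ω => bS ω.2 ω.2))
        (finite_range_Dn n _ _ (fun ω => bS ω.1.2 ω.2)))))))))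
    _ hae
  have h1 : entOf P' (fun ω => (Dn n (X ω.1.1), Dn n (Y ω.1.1), Dn n (X ω.1.2), Dn n (Y ω.2))) =
    HF w (fun i => (Dn n (X (r i).1.1), Dn n (Y (r i).1.1), Dn n (X (r i).1.2),
      Dn n (Y (r i).2))) := hent _ (fun s => (s.1, s.2.1, s.2.2.1, s.2.2.2.1))
  have h2 : entOf P' (fun ω => Dn n (X ω.1.2)) = HF w (fun i => Dn n (X (r i).1.2)) :=
    hent _ (fun s => s.2.2.1)
  have h3 : entOf P' (fun ω => Dn n (Y ω.2)) = HF w (fun i => Dn n (Y (r i).2)) :=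
    hent _ (fun s => s.2.2.2.1)
  have h4 : entOf P' (fun ω => Dn n (f (X ω.1.1) + g (Y ω.1.1))) =
    HF w (fun i => Dn n (f (X (r i).1.1) + g (Y (r i).1.1))) :=
    hent _ (fun s => s.2.2.2.2.1)
  have h5 : entOf P' (fun ω => Dn n (f (X ω.1.2) + g (Y ω.1.2))) =
    HF w (fun i => Dn n (f (X (r i).1.2) + g (Y (r i).1.2))) :=
    hent _ (fun s => s.2.2.2.2.2.1)
  have h6 : entOf P' (fun ω => Dn n (f (X ω.2) + g (Y ω.2))) =
    HF w (fun i => Dn n (f (X (r i).2) + g (Y (r i).2))) :=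
    hent _ (fun s => s.2.2.2.2.2.2.1)
  have h8 : entOf P' (fun ω => (Dn n (X ω.1.1), Dn n (Y ω.1.1))) =
    HF w (fun i => (Dn n (X (r i).1.1), Dn n (Y (r i).1.1))) := hent _ (fun s => (s.1, s.2.1))
  have h9 : entOf P' (fun ω => (Dn n (f (X ω.1.2) + g (Y ω.2)),
      (Dn n (X ω.1.1), Dn n (Y ω.1.1)))) =
    HF w (fun i => (Dn n (f (X (r i).1.2) + g (Y (r i).2)),
      (Dn n (X (r i).1.1), Dn n (Y (r i).1.1)))) :=
    hent _ (fun s => (s.2.2.2.2.2.2.2, (s.1, s.2.1)))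
  have hmain := main_bound hw hw1 n L κ hκ f g (Set.range X) (Set.range Y) hf hg
    (fun i => X (r i).1.1) (fun i => X (r i).1.2) (fun i => X (r i).2)
    (fun i => Y (r i).1.1) (fun i => Y (r i).1.2) (fun i => Y (r i).2)
    (fun i => ⟨_, rfl⟩) (fun i => ⟨_, rfl⟩) (fun i => ⟨_, rfl⟩)
    (fun i => ⟨_, rfl⟩) (fun i => ⟨_, rfl⟩) (fun i => ⟨_, rfl⟩)
    (fun i => (hG i).1) (fun i => (hG i).2)
  have hadd := HF_add hw hw1 (fun i => Dn n (f (X (r i).1.2) + g (Y (r i).2)))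
    (fun i => (Dn n (X (r i).1.1), Dn n (Y (r i).1.1)))
  linarith

/-- Discretized entropy Balog–Szemerédi–Gowers theorem. For any bound `L` on the number of
pieces in the weak bi-Lipschitz decompositions, there is a constant `A > 0` such that:
given `n` and a bounded bivariate random variable `(X,Y)` with
`Hₙ(X) + Hₙ(Y) − Hₙ(X,Y) ≤ log K₁`, there exists `(X'', Y', X', Y'')` (on some probability
space) with: (i) `(X',Y') ≡ (X,Y)`; (ii) `X', X''` conditionally i.i.d. given `Dₙ(Y')`;
(iii) `Y', Y''` conditionally i.i.d. given `Dₙ(X')`; (iv) `(X'',Y')` and `Y''` conditionally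
independent given `Dₙ(X')`, and in particular `X''`, `Y''` conditionally independent given
`Dₙ(X',Y')`; moreover `Hₙ(X''|X',Y') ≥ Hₙ(X) − log K₁`, `Hₙ(Y''|X',Y') ≥ Hₙ(Y) − log K₁`;
and for all `κ ≥ 2` and weakly κ-bi-Lipschitz `f, g` with
`Hₙ(f(X)+g(Y)) − (Hₙ(X)+Hₙ(Y))/2 ≤ log K₂`, one has
`Hₙ(f(X'')+g(Y'') | X',Y') − (Hₙ(X)+Hₙ(Y))/2 ≤ 4 log K₁ + 3 log K₂ + A log κ`. -/
theorem discretized_entropy_BSG (L : ℕ) :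
    ∃ A : ℝ, 0 < A ∧
      ∀ (n : ℕ) (Ω : Type) (mΩ : MeasurableSpace Ω) (P : Measure Ω),
        IsProbabilityMeasure P →
        ∀ (X Y : Ω → ℝ), Measurable X → Measurable Y →
          ∀ c : ℝ, (∀ ω, |X ω| ≤ c ∧ |Y ω| ≤ c) →
            ∀ K₁ : ℝ, Hn P n X + Hn P n Y - Hn2 P n X Y ≤ Real.logb 2 K₁ →
              ∃ (Ω' : Type) (mΩ' : MeasurableSpace Ω') (P' : Measure Ω'),
                IsProbabilityMeasure P' ∧
                ∃ X'' Y' X' Y'' : Ω' → ℝ,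
                  Measurable X'' ∧ Measurable Y' ∧ Measurable X' ∧ Measurable Y'' ∧
                  Measure.map (fun ω => (X' ω, Y' ω)) P' =
                    Measure.map (fun ω => (X ω, Y ω)) P ∧
                  CondIIDGiven P' X' X'' (fun ω => Dn n (Y' ω)) ∧
                  CondIIDGiven P' Y' Y'' (fun ω => Dn n (X' ω)) ∧
                  CondIndepGiven P' (fun ω => (X'' ω, Y' ω)) Y'' (fun ω => Dn n (X' ω)) ∧
                  CondIndepGiven P' X'' Y'' (fun ω => (Dn n (X' ω), Dn n (Y' ω))) ∧
                  Hn P n X - Real.logb 2 K₁ ≤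
                    condEntOf P' (fun ω => Dn n (X'' ω))
                      (fun ω => (Dn n (X' ω), Dn n (Y' ω))) ∧
                  Hn P n Y - Real.logb 2 K₁ ≤
                    condEntOf P' (fun ω => Dn n (Y'' ω))
                      (fun ω => (Dn n (X' ω), Dn n (Y' ω))) ∧
                  ∀ (κ : ℝ), 2 ≤ κ → ∀ f g : ℝ → ℝ, Measurable f → Measurable g →
                    WeaklyBiLipschitzOn f (Set.range X) κ L →
                    WeaklyBiLipschitzOn g (Set.range Y) κ L →
                    ∀ K₂ : ℝ,
                      Hn P n (fun ω => f (X ω) + g (Y ω)) - (Hn P n X + Hn P n Y) / 2 ≤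
                        Real.logb 2 K₂ →
                      condEntOf P' (fun ω => Dn n (f (X'' ω) + g (Y'' ω)))
                          (fun ω => (Dn n (X' ω), Dn n (Y' ω))) -
                          (Hn P n X + Hn P n Y) / 2 ≤
                        4 * Real.logb 2 K₁ + 3 * Real.logb 2 K₂ + A * Real.logb 2 κ := by
  have hL : (1:ℝ) ≤ 16 * (L + 1) := by
    have : (0:ℝ) ≤ L := Nat.cast_nonneg L
    linarith
  have hlL : 0 ≤ Real.logb 2 (16 * (L + 1)) := Real.logb_nonneg (by norm_num) hL
  refine ⟨4 * (Real.logb 2 (16 * (L + 1)) + 2), by linarith, ?_⟩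
  intro n Ω mΩ P hP X Y hX hY c hc K₁ hK₁
  obtain ⟨P', hP', m1, m2, m3, hae, F2, F1⟩ := construct P n X Y hX hY
  have p1 : Measurable (fun ω : (Ω × Ω) × Ω => ω.1.1) := by fun_prop
  have p2 : Measurable (fun ω : (Ω × Ω) × Ω => ω.1.2) := by fun_prop
  have p3 : Measurable (fun ω : (Ω × Ω) × Ω => ω.2) := by fun_prop
  obtain ⟨c1, c2, c3, c4⟩ := cond_facts P n X Y hX hY P' m1 m2 m3 hae F2 F1
  obtain ⟨e1, e2, e3, e4, e5⟩ := entropy_facts P n X Y hX hY c hc P' m1 m2 m3 hae F2 F1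
  refine ⟨(Ω × Ω) × Ω, inferInstance, P', hP', fun ω => X ω.1.2, fun ω => Y ω.1.1,
    fun ω => X ω.1.1, fun ω => Y ω.2, hX.comp p2, hY.comp p1, hX.comp p1, hY.comp p3,
    ?_, c1, c2, c3, c4, ?_, ?_, ?_⟩
  · conv_rhs => rw [← m1]
    rw [Measure.map_map (hX.prodMk hY) p1]
    rfl
  · unfold condEntOf
    linarith
  · unfold condEntOf
    linarith
  · intro κ hκ f g hfm hgm hf hg K₂ hK₂
    have hs := sum_facts P n L X Y hX hY c hc P' m1 m2 m3 hae κ hκ f g hfm hgm hf hg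
    have hκ1 : 1 ≤ Real.logb 2 κ := by
      rw [Real.le_logb_iff_rpow_le (by norm_num) (by linarith)]
      simpa using hκ
    have hlog : Real.logb 2 (16 * (L + 1) * κ ^ 2) =
        Real.logb 2 (16 * (L + 1)) + 2 * Real.logb 2 κ := by
      rw [Real.logb_mul (by linarith) (by positivity), Real.logb_pow]
      norm_num
    have h5 : Real.logb 2 (16 * (L + 1)) ≤ Real.logb 2 (16 * (L + 1)) * Real.logb 2 κ := by
      nlinarith
    rw [hlog] at hs
    unfold condEntOf
    nlinarith
end

section
/- Let 1/2 < s < 1 and C, R > 0. Let W be a (2s, C)-Frostman random variable with values in the ball B(0,R) ⊂ ℝ², and let W' be an independent copy of W. Then there are an absolute constant A > 0 and, for each t, a constant B_t > 0 depending only on t, such that for every t with t ≤ 1 and s < t < 2s − 1/2 and every n ∈ ℕ, Hₙ(|W − W'|) ≥ n·t − log₊C − A·log₊R − A·|log(2s − t − 1/2)| − B_t. -/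
open MeasureTheory ProbabilityTheory Real

/-- `X` is `(s,C)`-Frostman: `P(X ∈ B(z,r)) ≤ C r^s` for every ball. -/
def Frostman {Ω : Type*} [MeasurableSpace Ω] {E : Type*} [PseudoMetricSpace E]
    (P : Measure Ω) (X : Ω → E) (s C : ℝ) : Prop :=
  ∀ (z : E) (r : ℝ), 0 < r → (P (X ⁻¹' Metric.ball z r)).toReal ≤ C * r ^ s

/-- `log₊ x = max (log₂ x) 0`. -/
noncomputable def logPlus (x : ℝ) : ℝ := max (Real.logb 2 x) 0


lemma J_quarter (l : ℝ) (hl : 1 ≤ l) :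
    ∫ θ in (0:ℝ)..(π/2), cos (l * cos θ) ≤ 5 * l ^ (-(1/2) : ℝ) := by
  have hl0 : 0 < l := by linarith
  set e : ℝ := l ^ (-(1/2) : ℝ) with he
  have he0 : 0 < e := rpow_pos_of_pos hl0 _
  have he1 : e ≤ 1 := rpow_le_one_of_one_le_of_nonpos hl (by norm_num)
  have hee : l * e * e = 1 := by
    have : e * e = l⁻¹ := by
      rw [he, ← rpow_add hl0]; norm_num [rpow_neg_one]
    rw [mul_assoc, this]; field_simp
  have hpi := pi_gt_three
  have hpi' := pi_lt_four
  have hcont : Continuous fun θ : ℝ => cos (l * cos θ) := by fun_prop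
  rw [← intervalIntegral.integral_add_adjacent_intervals (b := e)
    (hcont.intervalIntegrable _ _) (hcont.intervalIntegrable _ _)]
  have h1 : ∫ θ in (0:ℝ)..e, cos (l * cos θ) ≤ e := by
    calc _ ≤ ∫ θ in (0:ℝ)..e, (1:ℝ) :=
          intervalIntegral.integral_mono_on he0.le (hcont.intervalIntegrable _ _) (by simp)
            (fun x _ => cos_le_one _)
      _ = e := by simp
  have hsin : ∀ x ∈ Set.Icc e (π/2), 0 < sin x := fun x hx =>
    sin_pos_of_pos_of_lt_pi (lt_of_lt_of_le he0 hx.1) (by linarith [hx.2])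
  have h2 : ∫ θ in e..(π/2), cos (l * cos θ) ≤
      (fun θ => -(sin (l * cos θ) / (l * sin θ)) - 1 / (l * sin θ)) (π/2) -
      (fun θ => -(sin (l * cos θ) / (l * sin θ)) - 1 / (l * sin θ)) e := by
    have hder : ∀ x ∈ Set.Icc e (π/2), HasDerivAt
        (fun θ => -(sin (l * cos θ) / (l * sin θ)) - 1 / (l * sin θ))
        (cos (l * cos x) + (1 + sin (l * cos x)) * cos x / (l * sin x ^ 2)) x := by
      intro x hx
      have hs := hsin x hx
      have hd1 : HasDerivAt (fun θ => l * sin θ) (l * cos x) x := (hasDerivAt_sin x).const_mul l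
      have hd2 : HasDerivAt (fun θ => sin (l * cos θ)) (cos (l * cos x) * (l * (- sin x))) x :=
        (((hasDerivAt_cos x).const_mul l)).sin
      have hne : l * sin x ≠ 0 := by positivity
      have := ((hd2.div hd1 hne).neg).sub ((hasDerivAt_const x (1:ℝ)).div hd1 hne)
      refine this.congr_deriv ?_
      field_simp
      ring
    refine intervalIntegral.integral_le_sub_of_hasDeriv_right_of_le (by linarith)
      (fun x hx => (hder x hx).continuousAt.continuousWithinAt)
      (fun x hx => (hder x ⟨hx.1.le, hx.2.le⟩).hasDerivWithinAt)
      (hcont.integrableOn_Icc) ?_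
    intro x hx
    have hs := hsin x ⟨hx.1.le, hx.2.le⟩
    have hc : 0 ≤ cos x := cos_nonneg_of_mem_Icc ⟨by linarith [hx.1], hx.2.le⟩
    have : 0 ≤ (1 + sin (l * cos x)) * cos x / (l * sin x ^ 2) := by
      have := neg_one_le_sin (l * cos x)
      apply div_nonneg (mul_nonneg (by linarith) hc); positivity
    linarith
  simp only [cos_pi_div_two, sin_pi_div_two, mul_zero, sin_zero, zero_div, neg_zero, mul_one] at h2
  have hse : 1/2 * e ≤ sin e := by
    have := Real.mul_le_sin he0.le (by linarith)
    refine le_trans ?_ this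
    apply mul_le_mul_of_nonneg_right _ he0.le
    rw [div_le_div_iff₀ (by norm_num) (by positivity)]; linarith
  have hs0 : 0 < sin e := by linarith
  have h3 : 1 / (l * sin e) ≤ 2 * e := by
    rw [div_le_iff₀ (by positivity)]
    nlinarith [mul_pos hl0 he0, mul_le_mul_of_nonneg_left hse (mul_pos hl0 he0).le]
  have h4 : sin (l * cos e) / (l * sin e) ≤ 1 / (l * sin e) := by
    gcongr; exact sin_le_one _
  have h5 : 0 ≤ 1 / l := by positivity
  linarith

lemma J_full (l : ℝ) (hl : 0 < l) :
    ∫ θ in (0:ℝ)..(2*π), cos (l * cos θ) ≤ 20 * l ^ (-(1/2) : ℝ) := by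
  have hcont : Continuous fun θ : ℝ => cos (l * cos θ) := by fun_prop
  rcases le_or_gt 1 l with h | h
  · have hII : ∀ a b, IntervalIntegrable (fun θ : ℝ => cos (l * cos θ)) volume a b :=
      fun a b => hcont.intervalIntegrable _ _
    have e1 : ∫ θ in π..(2*π), cos (l * cos θ) = ∫ θ in (0:ℝ)..π, cos (l * cos θ) := by
      have := intervalIntegral.integral_comp_add_right (fun θ => cos (l * cos θ)) (a := 0) (b := π) π
      simp only [cos_add_pi, mul_neg, cos_neg, zero_add] at this
      rw [this]; congr 1; ring
    have e2 : ∫ θ in (π/2)..π, cos (l * cos θ) = ∫ θ in (0:ℝ)..(π/2), cos (l * cos θ) := by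
      have := intervalIntegral.integral_comp_sub_left (fun θ => cos (l * cos θ)) (a := 0) (b := π/2) π
      simp only [cos_pi_sub, mul_neg, cos_neg, sub_zero] at this
      rw [this]; congr 1; ring
    rw [← intervalIntegral.integral_add_adjacent_intervals (hII 0 π) (hII π _), e1,
      ← intervalIntegral.integral_add_adjacent_intervals (hII 0 (π/2)) (hII _ π), e2]
    linarith [J_quarter l h]
  · calc _ ≤ ∫ θ in (0:ℝ)..(2*π), (1:ℝ) :=
          intervalIntegral.integral_mono_on (by positivity) (hcont.intervalIntegrable _ _) (by simp)
            (fun x _ => cos_le_one _)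
      _ = 2*π := by simp
      _ ≤ 20 * 1 := by linarith [pi_lt_four]
      _ ≤ _ := by
        gcongr
        exact one_le_rpow_of_pos_of_le_one_of_nonpos hl h.le (by norm_num)

noncomputable def eT (θ : ℝ) : EuclideanSpace ℝ (Fin 2) := !₂[cos θ, sin θ]

lemma eT_cont : Continuous eT := by
  unfold eT
  fun_prop

lemma eT_norm (θ : ℝ) : ‖eT θ‖ = 1 := by
  simp [eT, EuclideanSpace.norm_eq, Fin.sum_univ_two]

lemma exists_angle (x : EuclideanSpace ℝ (Fin 2)) :
    ∃ a : ℝ, ∀ θ, inner ℝ x (eT θ) = ‖x‖ * cos (θ - a) := by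
  let z : ℂ := ⟨x 0, x 1⟩
  have hz : ‖z‖ = ‖x‖ := by
    rw [EuclideanSpace.norm_eq, Complex.norm_eq_sqrt_sq_add_sq]
    simp [z, Fin.sum_univ_two]
  refine ⟨z.arg, fun θ => ?_⟩
  have h0 : ‖z‖ * cos z.arg = x 0 := Complex.norm_mul_cos_arg z
  have h1 : ‖z‖ * sin z.arg = x 1 := Complex.norm_mul_sin_arg z
  rw [hz] at h0 h1
  rw [cos_sub, mul_add]
  simp only [eT, PiLp.inner_apply, Fin.sum_univ_two]
  simp [← h0, ← h1]
  ring

lemma rot (h : ℝ → ℝ) (x : EuclideanSpace ℝ (Fin 2)) :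
    ∫ θ in (0:ℝ)..(2*π), h (inner ℝ x (eT θ)) = ∫ θ in (0:ℝ)..(2*π), h (‖x‖ * cos θ) := by
  obtain ⟨a, ha⟩ := exists_angle x
  simp_rw [ha]
  rw [intervalIntegral.integral_comp_sub_right (fun θ => h (‖x‖ * cos θ)) a]
  have hp : Function.Periodic (fun θ => h (‖x‖ * cos θ)) (2*π) := fun θ => by simp
  have := hp.intervalIntegral_add_eq (0 - a) 0
  rw [zero_add] at this
  rw [← this]; congr 1; ring

lemma gauss_int (v : ℝ) (hv : 0 < v) :
    Integrable (fun ξ : EuclideanSpace ℝ (Fin 2) => exp (-v * ‖ξ‖ ^ 2)) := by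
  have := (GaussianFourier.integrable_cexp_neg_mul_sq_norm_add (b := (v:ℂ)) (by simpa using hv) 0
    (0 : EuclideanSpace ℝ (Fin 2))).re
  refine this.congr (Filter.Eventually.of_forall fun ξ => ?_)
  simp only [zero_mul, add_zero]
  rw [← Complex.ofReal_re (exp (-v * ‖ξ‖ ^ 2))]
  push_cast; rfl

lemma gauss_cos (v : ℝ) (hv : 0 < v) (y : EuclideanSpace ℝ (Fin 2)) :
    ∫ ξ : EuclideanSpace ℝ (Fin 2), exp (-v * ‖ξ‖ ^ 2) * cos (inner ℝ ξ y) =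
      π / v * exp (-‖y‖ ^ 2 / (4 * v)) := by
  have hb : 0 < (v:ℂ).re := by simpa using hv
  have h := GaussianFourier.integral_cexp_neg_mul_sq_norm_add hb Complex.I y
  have hi := GaussianFourier.integrable_cexp_neg_mul_sq_norm_add hb Complex.I y
  have h2 := congrArg Complex.re h
  have h3 := integral_re hi
  simp only [RCLike.re_eq_complex_re] at h3
  rw [← h3] at h2
  convert h2 using 1
  · refine integral_congr_ae (Filter.Eventually.of_forall fun ξ => ?_)
    simp only []
    rw [Complex.exp_re]
    simp [real_inner_comm, ← Complex.ofReal_pow]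
  · rw [finrank_euclideanSpace_fin]
    have : ((Nat.cast 2 : ℂ) / 2) = 1 := by norm_num
    rw [this, Complex.cpow_one, Complex.I_sq]
    rw [← Complex.ofReal_re (π / v * exp (-‖y‖ ^ 2 / (4 * v)))]
    push_cast
    congr 3
    ring

section prob
variable {Ω : Type*} [MeasurableSpace Ω]

lemma cos_split (P : Measure Ω) [IsProbabilityMeasure P]
    (W W' : Ω → EuclideanSpace ℝ (Fin 2)) (hW : Measurable W) (hW' : Measurable W')
    (hi : IndepFun W W' P) (hm : Measure.map W P = Measure.map W' P)
    (ξ : EuclideanSpace ℝ (Fin 2)) (a : ℝ) :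
    ∫ ω, cos (inner ℝ ξ (W ω - W' ω) - a) ∂P =
      ((∫ ω, cos (inner ℝ ξ (W ω)) ∂P) ^ 2 + (∫ ω, sin (inner ℝ ξ (W ω)) ∂P) ^ 2) * cos a := by
  set f : EuclideanSpace ℝ (Fin 2) → ℝ := fun x => cos (inner ℝ ξ x) with hf
  set g : EuclideanSpace ℝ (Fin 2) → ℝ := fun x => sin (inner ℝ ξ x) with hg
  have cf : Measurable f := by have : Continuous f := by fun_prop
                               exact this.measurable
  have cg : Measurable g := by have : Continuous g := by fun_prop
                               exact this.measurable
  have bf : ∀ x, ‖f x‖ ≤ 1 := fun x => abs_cos_le_one _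
  have bg : ∀ x, ‖g x‖ ≤ 1 := fun x => abs_sin_le_one _
  have tr : ∀ h : EuclideanSpace ℝ (Fin 2) → ℝ, Measurable h →
      ∫ ω, h (W' ω) ∂P = ∫ ω, h (W ω) ∂P := by
    intro h hh
    rw [← integral_map (φ := W') hW'.aemeasurable hh.aestronglyMeasurable, ← hm,
      integral_map hW.aemeasurable hh.aestronglyMeasurable]
  have key : ∀ h k : EuclideanSpace ℝ (Fin 2) → ℝ, Measurable h → Measurable k →
      ∫ ω, h (W ω) * k (W' ω) ∂P = (∫ ω, h (W ω) ∂P) * ∫ ω, k (W ω) ∂P := by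
    intro h k hh hk
    have := (hi.comp hh hk).integral_mul_eq_mul_integral
      (hh.comp hW).aestronglyMeasurable (hk.comp hW').aestronglyMeasurable
    simp only [Pi.mul_apply, Function.comp] at this
    rw [this, tr k hk]
  have int : ∀ h k : EuclideanSpace ℝ (Fin 2) → ℝ, Measurable h → Measurable k →
      (∀ x, ‖h x‖ ≤ 1) → (∀ x, ‖k x‖ ≤ 1) → Integrable (fun ω => h (W ω) * k (W' ω)) P := by
    intro h k hh hk bh bk
    refine Integrable.of_bound ((hh.comp hW).mul (hk.comp hW')).aestronglyMeasurable 1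
      (Filter.Eventually.of_forall fun ω => ?_)
    rw [norm_mul]
    exact mul_le_one₀ (bh _) (norm_nonneg _) (bk _)
  have e : ∀ ω, cos (inner ℝ ξ (W ω - W' ω) - a) =
      (f (W ω) * f (W' ω) + g (W ω) * g (W' ω)) * cos a +
      (g (W ω) * f (W' ω) - f (W ω) * g (W' ω)) * sin a := by
    intro ω
    rw [inner_sub_right, cos_sub, cos_sub, sin_sub]
  simp_rw [e]
  have i1 := int f f cf cf bf bf
  have i2 := int g g cg cg bg bg
  have i3 := int g f cg cf bg bf
  have i4 := int f g cf cg bf bg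
  rw [integral_add (f := fun ω => (f (W ω) * f (W' ω) + g (W ω) * g (W' ω)) * cos a)
    (g := fun ω => (g (W ω) * f (W' ω) - f (W ω) * g (W' ω)) * sin a)
    ((i1.add i2).mul_const _) ((i3.sub i4).mul_const _), integral_mul_const,
    integral_mul_const, integral_add i1 i2, integral_sub i3 i4, key _ _ cf cf, key _ _ cg cg,
    key _ _ cf cg, key _ _ cg cf]
  ring

/-- real part of the characteristic function -/
noncomputable def mX (P : Measure Ω) (X : Ω → EuclideanSpace ℝ (Fin 2))
    (ξ : EuclideanSpace ℝ (Fin 2)) : ℝ := ∫ ω, cos (inner ℝ ξ (X ω)) ∂P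

lemma mX_le (P : Measure Ω) [IsProbabilityMeasure P] (X : Ω → EuclideanSpace ℝ (Fin 2)) (ξ) :
    |mX P X ξ| ≤ 1 := by
  have := norm_integral_le_of_norm_le_const (μ := P) (f := fun ω => cos (inner ℝ ξ (X ω))) (C := 1)
    (Filter.Eventually.of_forall fun ω => abs_cos_le_one _)
  simpa [mX] using this

lemma mX_meas (P : Measure Ω) [IsProbabilityMeasure P] (X : Ω → EuclideanSpace ℝ (Fin 2))
    (hX : Measurable X) : Measurable (mX P X) := by
  have : StronglyMeasurable (fun p : EuclideanSpace ℝ (Fin 2) × Ω => cos (inner ℝ p.1 (X p.2))) := by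
    apply Measurable.stronglyMeasurable
    fun_prop
  exact this.integral_prod_right.measurable

lemma fub1 (P : Measure Ω) [IsProbabilityMeasure P] (X : Ω → EuclideanSpace ℝ (Fin 2))
    (hX : Measurable X)
    (hs : ∀ ξ a, ∫ ω, cos (inner ℝ ξ (X ω) - a) ∂P = mX P X ξ * cos a)
    (v : ℝ) (hv : 0 < v) (y : EuclideanSpace ℝ (Fin 2)) :
    ∫ ω, π / v * exp (-‖X ω - y‖ ^ 2 / (4 * v)) ∂P =
      ∫ ξ, exp (-v * ‖ξ‖ ^ 2) * (mX P X ξ * cos (inner ℝ ξ y)) := by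
  simp_rw [← gauss_cos v hv]
  rw [integral_integral_swap]
  · congr 1; ext ξ
    rw [integral_const_mul, ← hs]
    simp_rw [inner_sub_right]
  · have := (gauss_int v hv).comp_snd P
    refine this.mono' ?_ (Filter.Eventually.of_forall fun p => ?_)
    · apply Measurable.aestronglyMeasurable
      unfold Function.uncurry
      fun_prop
    · simp only [Function.uncurry, norm_mul, norm_eq_abs, abs_exp]
      exact mul_le_of_le_one_right (exp_nonneg _) (abs_cos_le_one _)

lemma fub2 (P : Measure Ω) [IsProbabilityMeasure P] (X : Ω → EuclideanSpace ℝ (Fin 2))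
    (hX : Measurable X)
    (hs : ∀ ξ a, ∫ ω, cos (inner ℝ ξ (X ω) - a) ∂P = mX P X ξ * cos a)
    (v r : ℝ) (hv : 0 < v) :
    ∫ ω, (∫ θ in (0:ℝ)..(2*π), π / v * exp (-‖X ω - r • eT θ‖ ^ 2 / (4 * v))) ∂P =
      ∫ ξ, exp (-v * ‖ξ‖ ^ 2) * mX P X ξ *
        ∫ θ in (0:ℝ)..(2*π), cos (r * ‖ξ‖ * cos θ) := by
  have heT := eT_cont.measurable
  have hmX := mX_meas P X hX
  have : IsFiniteMeasure (volume.restrict (Set.uIoc 0 (2*π))) :=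
    inferInstanceAs (IsFiniteMeasure (volume.restrict (Set.Ioc _ _)))
  rw [← intervalIntegral_integral_swap]
  · simp_rw [fub1 P X hX hs v hv]
    rw [intervalIntegral_integral_swap]
    · congr 1; ext ξ
      simp_rw [← mul_assoc]
      rw [intervalIntegral.integral_const_mul]
      congr 1
      have := rot (fun z => cos (r * z)) ξ
      simp only [inner_smul_right, mul_assoc] at this ⊢
      exact this
    · have := (gauss_int v hv).comp_snd (volume.restrict (Set.uIoc 0 (2*π)))
      refine this.mono' ?_ (Filter.Eventually.of_forall fun p => ?_)
      · apply Measurable.aestronglyMeasurable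
        unfold Function.uncurry
        fun_prop
      · simp only [Function.uncurry, norm_mul, norm_eq_abs, abs_exp]
        exact mul_le_of_le_one_right (exp_nonneg _)
          (mul_le_one₀ (mX_le _ _ _) (abs_nonneg _) (abs_cos_le_one _))
  · refine Integrable.of_bound (C := π / v) ?_ (Filter.Eventually.of_forall fun p => ?_)
    · apply Measurable.aestronglyMeasurable
      unfold Function.uncurry
      fun_prop
    · have : 0 < π / v := by positivity
      simp only [Function.uncurry, norm_mul, norm_eq_abs, abs_exp, abs_of_pos this]
      refine mul_le_of_le_one_right this.le (exp_le_one_iff.2 ?_)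
      apply div_nonpos_of_nonpos_of_nonneg _ (by positivity)
      linarith [sq_nonneg ‖p.snd |> X |> fun z => z - r • eT p.fst‖]

lemma gamma_lint (q : ℝ) (hq : 0 < q) :
    ENNReal.ofReal (q ^ (-(1/2) : ℝ)) = ENNReal.ofReal (1 / Gamma (1/4)) *
      ∫⁻ u in Set.Ioi (0:ℝ), ENNReal.ofReal (u ^ (-(3/4) : ℝ) * exp (-(q ^ 2 * u))) := by
  have h := integral_rpow_mul_exp_neg_mul_Ioi (a := 1/4) (r := q ^ 2) (by norm_num) (by positivity)
  have hG : 0 < Gamma (1/4) := Gamma_pos_of_pos (by norm_num)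
  have e1 : ((1:ℝ)/4 - 1) = -(3/4) := by norm_num
  have e2 : (1 / q ^ 2) ^ ((1:ℝ)/4) = q ^ (-(1/2) : ℝ) := by
    rw [one_div, inv_rpow (by positivity), ← rpow_natCast, ← rpow_mul hq.le, ← rpow_neg hq.le]
    norm_num
  rw [e1, e2] at h
  rw [← ofReal_integral_eq_lintegral_ofReal, h, ← ENNReal.ofReal_mul (by positivity)]
  · congr 1; field_simp
  · apply Integrable.of_integral_ne_zero
    rw [h]; positivity
  · filter_upwards [ae_restrict_mem measurableSet_Ioi] with u hu
    have : (0:ℝ) < u := hu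
    positivity

lemma upper (P : Measure Ω) [IsProbabilityMeasure P] (X : Ω → EuclideanSpace ℝ (Fin 2))
    (hX : Measurable X)
    (hs : ∀ ξ a, ∫ ω, cos (inner ℝ ξ (X ω) - a) ∂P = mX P X ξ * cos a)
    (h0 : ∀ ξ, 0 ≤ mX P X ξ)
    (v r : ℝ) (hv : 0 < v) (hr : 0 < r) :
    ENNReal.ofReal (∫ ω, (∫ θ in (0:ℝ)..(2*π), π / v * exp (-‖X ω - r • eT θ‖ ^ 2 / (4 * v))) ∂P) ≤
      ENNReal.ofReal (20 * r ^ (-(1/2) : ℝ) * (1 / Gamma (1/4))) *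
       ∫⁻ u in Set.Ioi (0:ℝ), ENNReal.ofReal (u ^ (-(3/4) : ℝ) *
        ∫ ω, π / (v + u) * exp (-‖X ω‖ ^ 2 / (4 * (v + u))) ∂P) := by
  have hmX := mX_meas P X hX
  have hG : 0 < Gamma (1/4) := Gamma_pos_of_pos (by norm_num)
  rw [fub2 P X hX hs v r hv]
  refine (ENNReal.ofReal_le_ofReal_iff'.2 (Or.inl (le_refl _))).trans ?_
  have hofle : ∀ f : EuclideanSpace ℝ (Fin 2) → ℝ,
      ENNReal.ofReal (∫ ξ, f ξ) ≤ ∫⁻ ξ, ENNReal.ofReal (f ξ) := by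
    intro f
    by_cases hf : Integrable f
    · rw [integral_eq_lintegral_pos_part_sub_lintegral_neg_part hf]
      refine (ENNReal.ofReal_le_ofReal (sub_le_self _ ENNReal.toReal_nonneg)).trans ?_
      exact ENNReal.ofReal_toReal_le
    · rw [integral_undef hf]; simp
  refine (hofle _).trans ?_
  have step : ∀ᵐ ξ : EuclideanSpace ℝ (Fin 2), ENNReal.ofReal (exp (-v * ‖ξ‖ ^ 2) * mX P X ξ *
        ∫ θ in (0:ℝ)..(2*π), cos (r * ‖ξ‖ * cos θ)) ≤
      ENNReal.ofReal (20 * r ^ (-(1/2) : ℝ) * (1 / Gamma (1/4))) *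
        ∫⁻ u in Set.Ioi (0:ℝ), ENNReal.ofReal (u ^ (-(3/4) : ℝ) *
          (exp (-(v + u) * ‖ξ‖ ^ 2) * mX P X ξ)) := by
    have : ∀ᵐ ξ : EuclideanSpace ℝ (Fin 2), ξ ≠ 0 := by
      simp [ae_iff]
    filter_upwards [this] with ξ hξ
    have hq : 0 < ‖ξ‖ := norm_pos_iff.2 hξ
    calc _ ≤ ENNReal.ofReal (exp (-v * ‖ξ‖ ^ 2) * mX P X ξ * (20 * (r * ‖ξ‖) ^ (-(1/2) : ℝ))) := by
          apply ENNReal.ofReal_le_ofReal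
          exact mul_le_mul_of_nonneg_left (J_full _ (by positivity)) (mul_nonneg (exp_nonneg _) (h0 _))
      _ = ENNReal.ofReal (20 * r ^ (-(1/2) : ℝ)) * ENNReal.ofReal (exp (-v * ‖ξ‖ ^ 2) * mX P X ξ)
            * ENNReal.ofReal (‖ξ‖ ^ (-(1/2) : ℝ)) := by
          rw [← ENNReal.ofReal_mul (by positivity), ← ENNReal.ofReal_mul
            (mul_nonneg (by positivity) (mul_nonneg (exp_nonneg _) (h0 _))),
            mul_rpow hr.le hq.le]
          congr 1; ring
      _ = _ := by
          rw [gamma_lint _ hq, ENNReal.ofReal_mul (p := 20 * r ^ (-(1/2) : ℝ)) (by positivity)]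
          have : ∫⁻ u in Set.Ioi (0:ℝ), ENNReal.ofReal (u ^ (-(3/4) : ℝ) *
              (exp (-(v + u) * ‖ξ‖ ^ 2) * mX P X ξ)) =
              ENNReal.ofReal (exp (-v * ‖ξ‖ ^ 2) * mX P X ξ) * ∫⁻ u in Set.Ioi (0:ℝ),
                ENNReal.ofReal (u ^ (-(3/4) : ℝ) * exp (-(‖ξ‖ ^ 2 * u))) := by
            rw [← lintegral_const_mul _ (by fun_prop)]
            congr 1; ext u
            rw [← ENNReal.ofReal_mul (mul_nonneg (exp_nonneg _) (h0 _))]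
            congr 1
            have : -(v + u) * ‖ξ‖ ^ 2 = -v * ‖ξ‖ ^ 2 + -(‖ξ‖ ^ 2 * u) := by ring
            rw [this, exp_add]; ring
          rw [this]; ring
  refine (lintegral_mono_ae step).trans ?_
  rw [lintegral_const_mul _ (by
    apply Measurable.lintegral_prod_right' (f := fun p : EuclideanSpace ℝ (Fin 2) × ℝ => ENNReal.ofReal (p.2 ^ (-(3/4) : ℝ) *
          (exp (-(v + p.2) * ‖p.1‖ ^ 2) * mX P X p.1)))
    fun_prop)]
  gcongr
  rw [lintegral_lintegral_swap (by
    apply Measurable.aemeasurable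
    unfold Function.uncurry
    fun_prop)]
  refine lintegral_mono_ae ?_
  filter_upwards [ae_restrict_mem measurableSet_Ioi] with u hu
  have hu0 : (0:ℝ) < u := hu
  have := fub1 P X hX hs (v + u) (by positivity) 0
  simp only [sub_zero, inner_zero_right, cos_zero, mul_one] at this
  rw [this, ← integral_const_mul, ofReal_integral_eq_lintegral_ofReal]
  · refine Integrable.const_mul ?_ _
    refine (gauss_int (v+u) (by positivity)).mono' (by apply Measurable.aestronglyMeasurable; fun_prop)
      (Filter.Eventually.of_forall fun ξ => ?_)
    rw [norm_mul, norm_eq_abs, norm_eq_abs, abs_exp]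
    exact mul_le_of_le_one_right (exp_nonneg _) (mX_le _ _ _)
  · exact Filter.Eventually.of_forall fun ξ =>
      mul_nonneg (by positivity) (mul_nonneg (exp_nonneg _) (h0 _))

end prob

section prob2
variable {Ω : Type*} [MeasurableSpace Ω]

lemma lower_pt (x : EuclideanSpace ℝ (Fin 2)) (d r : ℝ) (hd : 0 < d) (hdr : d ≤ r)
    (h1 : r - d ≤ ‖x‖) (h2 : ‖x‖ ≤ r) :
    π / (2 * d * r) ≤ ∫ θ in (0:ℝ)..(2*π), π / d ^ 2 * exp (-‖x - r • eT θ‖ ^ 2 / (4 * d ^ 2)) := by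
  have hr : 0 < r := by linarith
  have e : ∀ θ, ‖x - r • eT θ‖ ^ 2 = ‖x‖ ^ 2 + r ^ 2 - 2 * r * inner ℝ x (eT θ) := by
    intro θ
    rw [norm_sub_sq_real, norm_smul, eT_norm, inner_smul_right, norm_eq_abs, abs_of_pos hr]
    ring
  simp_rw [e]
  rw [rot (fun z => π / d ^ 2 * exp (-(‖x‖ ^ 2 + r ^ 2 - 2 * r * z) / (4 * d ^ 2))) x]
  have hc : Continuous fun θ : ℝ => π / d ^ 2 *
      exp (-(‖x‖ ^ 2 + r ^ 2 - 2 * r * (‖x‖ * cos θ)) / (4 * d ^ 2)) := by fun_prop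
  have hdr1 : d / r ≤ 1 := by rw [div_le_one hr]; exact hdr
  have hdr0 : 0 < d / r := by positivity
  rw [← intervalIntegral.integral_add_adjacent_intervals (b := d / r)
    (hc.intervalIntegrable _ _) (hc.intervalIntegrable _ _)]
  have a1 : 0 ≤ ∫ θ in (d/r)..(2*π), π / d ^ 2 *
      exp (-(‖x‖ ^ 2 + r ^ 2 - 2 * r * (‖x‖ * cos θ)) / (4 * d ^ 2)) :=
    intervalIntegral.integral_nonneg (by linarith [pi_gt_three]) fun θ _ => by positivity
  have a2 : ∫ θ in (0:ℝ)..(d/r), π / d ^ 2 * (1/2) ≤ ∫ θ in (0:ℝ)..(d/r), π / d ^ 2 *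
      exp (-(‖x‖ ^ 2 + r ^ 2 - 2 * r * (‖x‖ * cos θ)) / (4 * d ^ 2)) := by
    refine intervalIntegral.integral_mono_on hdr0.le (by simp) (hc.intervalIntegrable _ _) ?_
    intro θ hθ
    apply mul_le_mul_of_nonneg_left _ (by positivity)
    have hcos := one_sub_sq_div_two_le_cos (x := θ)
    have hθr : θ * r ≤ d := by
      have := hθ.2; rwa [le_div_iff₀ hr] at this
    have hθ0 := hθ.1
    have hsq : (θ * r) ^ 2 ≤ d ^ 2 := by
      apply pow_le_pow_left₀ (by positivity) hθr
    have hsq2 : (r - ‖x‖) ^ 2 ≤ d ^ 2 := by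
      apply pow_le_pow_left₀ (by linarith) (by linarith)
    have hn := norm_nonneg x
    have k1 : r * ‖x‖ * (1 - θ ^ 2 / 2) ≤ r * ‖x‖ * cos θ :=
      mul_le_mul_of_nonneg_left hcos (by positivity)
    have k2 : r * ‖x‖ * θ ^ 2 ≤ d ^ 2 := by
      refine le_trans ?_ hsq
      have : r * ‖x‖ * θ ^ 2 ≤ r * r * θ ^ 2 := by gcongr
      linarith
    have k3 : ‖x‖ ^ 2 + r ^ 2 - 2 * r * (‖x‖ * cos θ) ≤ 2 * d ^ 2 := by nlinarith
    have k4 : -(1/2) ≤ -(‖x‖ ^ 2 + r ^ 2 - 2 * r * (‖x‖ * cos θ)) / (4 * d ^ 2) := by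
      rw [le_div_iff₀ (by positivity)]; linarith
    have := add_one_le_exp (-(‖x‖ ^ 2 + r ^ 2 - 2 * r * (‖x‖ * cos θ)) / (4 * d ^ 2))
    linarith
  rw [intervalIntegral.integral_const] at a2
  have : (d / r - 0) • (π / d ^ 2 * (1/2)) = π / (2 * d * r) := by
    rw [smul_eq_mul]; field_simp; ring
  linarith

lemma lower (P : Measure Ω) [IsProbabilityMeasure P] (X : Ω → EuclideanSpace ℝ (Fin 2))
    (hX : Measurable X) (d r : ℝ) (hd : 0 < d) (hdr : d ≤ r) (S : Set Ω) (hSm : MeasurableSet S)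
    (hS : ∀ ω ∈ S, r - d ≤ ‖X ω‖ ∧ ‖X ω‖ ≤ r) :
    (P S).toReal * (π / (2 * d * r)) ≤
      ∫ ω, (∫ θ in (0:ℝ)..(2*π), π / d ^ 2 * exp (-‖X ω - r • eT θ‖ ^ 2 / (4 * d ^ 2))) ∂P := by
  have heT := eT_cont.measurable
  have hr : 0 < r := by linarith
  have : (P S).toReal * (π / (2 * d * r)) = ∫ ω, S.indicator (fun _ => π / (2 * d * r)) ω ∂P := by
    rw [integral_indicator hSm, setIntegral_const]; simp [Measure.real]
  rw [this]
  have hpos : ∀ ω, 0 ≤ ∫ θ in (0:ℝ)..(2*π), π / d ^ 2 * exp (-‖X ω - r • eT θ‖ ^ 2 / (4 * d ^ 2)) :=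
    fun ω => intervalIntegral.integral_nonneg (by positivity) fun θ _ => by positivity
  have hb : ∀ ω θ, ‖π / d ^ 2 * exp (-‖X ω - r • eT θ‖ ^ 2 / (4 * d ^ 2))‖ ≤ π / d ^ 2 := by
    intro ω θ
    have h : 0 < π / d ^ 2 := by positivity
    simp only [norm_mul, norm_eq_abs, abs_exp, abs_of_pos h]
    refine mul_le_of_le_one_right h.le (exp_le_one_iff.2 ?_)
    apply div_nonpos_of_nonpos_of_nonneg _ (by positivity)
    linarith [sq_nonneg ‖X ω - r • eT θ‖]
  refine integral_mono ((integrable_const _).indicator hSm) ?_ ?_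
  · refine Integrable.of_bound (C := π / d ^ 2 * |2 * π - 0|) ?_ (Filter.Eventually.of_forall fun ω =>
      intervalIntegral.norm_integral_le_of_norm_le_const fun θ _ => hb ω θ)
    simp_rw [intervalIntegral.integral_of_le (two_pi_pos.le)]
    apply StronglyMeasurable.aestronglyMeasurable
    apply StronglyMeasurable.integral_prod_right' (f := fun p : Ω × ℝ =>
      π / d ^ 2 * exp (-‖X p.1 - r • eT p.2‖ ^ 2 / (4 * d ^ 2)))
    apply Measurable.stronglyMeasurable
    fun_prop
  · intro ω
    by_cases h : ω ∈ S
    · simp only [Set.indicator_of_mem h]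
      exact lower_pt _ d r hd hdr (hS ω h).1 (hS ω h).2
    · simp only [Set.indicator_of_notMem h]
      exact hpos ω

lemma frost_diff (P : Measure Ω) [IsProbabilityMeasure P]
    (W W' : Ω → EuclideanSpace ℝ (Fin 2)) (hW : Measurable W) (hW' : Measurable W')
    (hi : IndepFun W W' P) (s C : ℝ) (hC : 0 < C) (hF : Frostman P W (2 * s) C)
    (r : ℝ) (hr : 0 < r) :
    P {ω | ‖W ω - W' ω‖ < r} ≤ ENNReal.ofReal (C * r ^ (2 * s)) := by
  have h := (indepFun_iff_map_prod_eq_prod_map_map hW.aemeasurable hW'.aemeasurable).1 hi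
  let T : Set (EuclideanSpace ℝ (Fin 2) × EuclideanSpace ℝ (Fin 2)) := {p | ‖p.1 - p.2‖ < r}
  have hT : MeasurableSet T := by
    apply IsOpen.measurableSet
    exact isOpen_lt (by fun_prop) (by fun_prop)
  have e : P {ω | ‖W ω - W' ω‖ < r} = Measure.map (fun ω => (W ω, W' ω)) P T := by
    rw [Measure.map_apply (hW.prodMk hW') hT]; rfl
  have := Measure.isProbabilityMeasure_map (μ := P) hW.aemeasurable
  have := Measure.isProbabilityMeasure_map (μ := P) hW'.aemeasurable
  rw [e, h, Measure.prod_apply_symm hT]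
  calc _ ≤ ∫⁻ y, ENNReal.ofReal (C * r ^ (2 * s)) ∂(Measure.map W' P) := by
        apply lintegral_mono
        intro y
        have : (fun x => (x, y)) ⁻¹' T = Metric.ball y r := by
          ext x; simp [T, dist_eq_norm]
        simp only [this]
        rw [Measure.map_apply hW Metric.isOpen_ball.measurableSet]
        rw [ENNReal.le_ofReal_iff_toReal_le (measure_ne_top _ _) (by positivity)]
        exact hF y r hr
    _ = _ := by simp

lemma exp_bound (P : Measure Ω) [IsProbabilityMeasure P] (X : Ω → EuclideanSpace ℝ (Fin 2))
    (hX : Measurable X) (s C : ℝ) (hs0 : 0 < s) (hs1 : s < 1) (hC : 0 < C)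
    (hF : ∀ r, 0 < r → P {ω | ‖X ω‖ < r} ≤ ENNReal.ofReal (C * r ^ (2 * s)))
    (w : ℝ) (hw : 0 < w) :
    ∫ ω, exp (-‖X ω‖ ^ 2 / (4 * w)) ∂P ≤ 8 * C * w ^ s := by
  rw [integral_eq_lintegral_of_nonneg_ae (Filter.Eventually.of_forall fun _ => (exp_nonneg _))
    (by apply Measurable.aestronglyMeasurable; fun_prop)]
  apply ENNReal.toReal_le_of_le_ofReal (by positivity)
  have e : ∀ a : ℝ, ENNReal.ofReal (exp (-a)) =
      ∫⁻ τ : ℝ, {p : ℝ × ℝ | p.1 < p.2}.indicator (fun p => ENNReal.ofReal (exp (-p.2))) (a, τ) := by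
    intro a
    have : ∀ τ : ℝ, {p : ℝ × ℝ | p.1 < p.2}.indicator (fun p => ENNReal.ofReal (exp (-p.2))) (a, τ)
       = (Set.Ioi a).indicator (fun τ => ENNReal.ofReal (exp (-τ))) τ := by
      intro τ; simp [Set.indicator]
    simp_rw [this]
    rw [lintegral_indicator measurableSet_Ioi, ← ofReal_integral_eq_lintegral_ofReal,
      integral_exp_neg_Ioi]
    · exact exp_neg_integrableOn_Ioi a one_pos |>.congr_fun (fun x _ => by simp) measurableSet_Ioi
    · exact Filter.Eventually.of_forall fun _ => exp_nonneg _
  have hms : MeasurableSet {p : ℝ × ℝ | p.1 < p.2} := measurableSet_lt measurable_fst measurable_snd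
  have hmi : Measurable ({p : ℝ × ℝ | p.1 < p.2}.indicator (fun p => ENNReal.ofReal (exp (-p.2)))) :=
    Measurable.indicator (by fun_prop) hms
  have e' : ∀ ω, ENNReal.ofReal (exp (-‖X ω‖ ^ 2 / (4 * w))) =
      ∫⁻ τ : ℝ, {p : ℝ × ℝ | p.1 < p.2}.indicator (fun p => ENNReal.ofReal (exp (-p.2)))
        (‖X ω‖ ^ 2 / (4 * w), τ) := by
    intro ω; rw [neg_div]; exact e _
  simp_rw [e']
  rw [lintegral_lintegral_swap (by
    apply Measurable.aemeasurable
    exact hmi.comp (g := _) (f := fun p : Ω × ℝ => (‖X p.1‖ ^ 2 / (4 * w), p.2)) (by fun_prop))]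
  have step : ∀ τ : ℝ, ∫⁻ ω, {p : ℝ × ℝ | p.1 < p.2}.indicator (fun p => ENNReal.ofReal (exp (-p.2)))
      (‖X ω‖ ^ 2 / (4 * w), τ) ∂P ≤
      (Set.Ioi (0:ℝ)).indicator (fun τ => ENNReal.ofReal (4 * C * w ^ s * (exp (-τ) * τ ^ (1-1:ℝ) +
        exp (-τ) * τ ^ (2-1:ℝ)))) τ := by
    intro τ
    have e2 : ∀ ω, {p : ℝ × ℝ | p.1 < p.2}.indicator (fun p => ENNReal.ofReal (exp (-p.2)))
      (‖X ω‖ ^ 2 / (4 * w), τ) = {ω | ‖X ω‖ ^ 2 / (4 * w) < τ}.indicator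
        (fun _ => ENNReal.ofReal (exp (-τ))) ω := by
      intro ω; simp [Set.indicator]
    simp_rw [e2]
    have hm2 : MeasurableSet {ω | ‖X ω‖ ^ 2 / (4 * w) < τ} :=
      measurableSet_lt (by fun_prop) (by fun_prop)
    rw [lintegral_indicator hm2, setLIntegral_const]
    rcases le_or_gt τ 0 with h | h
    · have : {ω | ‖X ω‖ ^ 2 / (4 * w) < τ} = ∅ := by
        ext ω; simp only [Set.mem_ofPred_eq, Set.mem_empty_iff_false, iff_false, not_lt]
        exact h.trans (by positivity)
      simp [this]
    · rw [Set.indicator_of_mem (by exact h)]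
      have hsub : {ω | ‖X ω‖ ^ 2 / (4 * w) < τ} = {ω | ‖X ω‖ < √(4 * w * τ)} := by
        ext ω
        simp only [Set.mem_ofPred_eq]
        rw [div_lt_iff₀ (by positivity), lt_sqrt (norm_nonneg _)]
        ring_nf
      rw [hsub]
      refine (mul_le_mul_right (hF _ (by positivity)) _).trans ?_
      rw [← ENNReal.ofReal_mul (exp_nonneg _)]
      apply ENNReal.ofReal_le_ofReal
      have e3 : √(4 * w * τ) ^ (2 * s) = 4 ^ s * w ^ s * τ ^ s := by
        rw [sqrt_eq_rpow, ← rpow_mul (by positivity)]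
        rw [show 1 / 2 * (2 * s) = s by ring, mul_rpow (by positivity) h.le,
          mul_rpow (by norm_num) hw.le]
      rw [e3]
      have e4 : (4:ℝ) ^ s ≤ 4 := by
        calc (4:ℝ) ^ s ≤ 4 ^ (1:ℝ) := rpow_le_rpow_of_exponent_le (by norm_num) hs1.le
          _ = 4 := by norm_num
      have e5 : τ ^ s ≤ 1 + τ := by
        rcases le_or_gt τ 1 with h1 | h1
        · have := rpow_le_one h.le h1 hs0.le
          linarith
        · have := rpow_le_rpow_of_exponent_le h1.le hs1.le
          rw [rpow_one] at this; linarith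
      have e6 : τ ^ (1-1:ℝ) = 1 := by norm_num
      have e7 : τ ^ (2-1:ℝ) = τ := by norm_num
      rw [e6, e7]
      calc exp (-τ) * (C * (4 ^ s * w ^ s * τ ^ s)) ≤ exp (-τ) * (C * (4 * w ^ s * (1 + τ))) := by
            gcongr
        _ = _ := by ring
  refine (lintegral_mono step).trans ?_
  rw [lintegral_indicator measurableSet_Ioi, ← ofReal_integral_eq_lintegral_ofReal]
  · apply ENNReal.ofReal_le_ofReal
    rw [integral_const_mul, integral_add (GammaIntegral_convergent (by norm_num))
      (GammaIntegral_convergent (by norm_num)), ← Gamma_eq_integral (by norm_num),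
      ← Gamma_eq_integral (by norm_num), Gamma_one, Gamma_two]
    linarith
  · exact ((GammaIntegral_convergent (by norm_num)).add
      (GammaIntegral_convergent (by norm_num))).const_mul _
  · filter_upwards [ae_restrict_mem measurableSet_Ioi] with u hu
    have : (0:ℝ) < u := hu
    positivity

end prob2

section prob3
variable {Ω : Type*} [MeasurableSpace Ω]

lemma u_int (s t C C1 d : ℝ) (hs1 : s < 1) (ht1 : t ≤ 1) (hst : s < t)
    (hk : 0 < 2 * s - t - 1/2) (hC : 0 < C) (hC1 : C ≤ C1) (h1C1 : 1 ≤ C1) (hd : 0 < d) (hd1 : d ≤ 1)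
    (F : ℝ → ℝ) (hF0 : ∀ w, 0 < w → F w ≤ 1) (hFC : ∀ w, 0 < w → F w ≤ 8 * C * w ^ s) :
    ∫⁻ u in Set.Ioi (0:ℝ), ENNReal.ofReal (u ^ (-(3/4) : ℝ) * (π / (d ^ 2 + u) * F (d ^ 2 + u))) ≤
      ENNReal.ofReal (8 * π * C1 * d ^ (t - 1) * 4 / (2 * s - t - 1/2)) := by
  set k := 2 * s - t - 1/2 with hkdef
  have hk2 : k < 1/2 := by linarith
  have hdt : 1 ≤ d ^ (t - 1) := one_le_rpow_of_pos_of_le_one_of_nonpos hd hd1 (by linarith)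
  have hsplit : Set.Ioi (0:ℝ) = Set.Ioc 0 1 ∪ Set.Ioi 1 := (Set.Ioc_union_Ioi_eq_Ioi zero_le_one).symm
  rw [hsplit]
  refine (lintegral_union_le _ _ _).trans ?_
  have b1 : ∫⁻ u in Set.Ioc (0:ℝ) 1, ENNReal.ofReal (u ^ (-(3/4) : ℝ) *
      (π / (d ^ 2 + u) * F (d ^ 2 + u))) ≤ ENNReal.ofReal (8 * π * C1 * d ^ (t - 1) * (2 / k)) := by
    have hint : IntervalIntegrable (fun u : ℝ => u ^ (k/2 - 1)) volume 0 1 :=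
      intervalIntegral.intervalIntegrable_rpow' (by linarith)
    have hval : ∫ u in Set.Ioc (0:ℝ) 1, u ^ (k/2 - 1) = 2 / k := by
      rw [← intervalIntegral.integral_of_le zero_le_one, integral_rpow (Or.inl (by linarith))]
      rw [sub_add_cancel, one_rpow, zero_rpow (by positivity)]
      field_simp; ring
    have : ENNReal.ofReal (8 * π * C1 * d ^ (t - 1) * (2 / k)) = ∫⁻ u in Set.Ioc (0:ℝ) 1,
        ENNReal.ofReal (8 * π * C1 * d ^ (t - 1) * u ^ (k/2 - 1)) := by
      rw [← hval, ← integral_const_mul, ofReal_integral_eq_lintegral_ofReal]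
      · exact ((intervalIntegrable_iff_integrableOn_Ioc_of_le zero_le_one).1 hint).const_mul _
      · filter_upwards [ae_restrict_mem measurableSet_Ioc] with u hu
        have := hu.1
        positivity
    rw [this]
    refine lintegral_mono_ae ?_
    filter_upwards [ae_restrict_mem measurableSet_Ioc] with u hu
    apply ENNReal.ofReal_le_ofReal
    have hu0 := hu.1
    have hw : 0 < d ^ 2 + u := by positivity
    have e1 : (d ^ 2 + u) ^ s = (d ^ 2 + u) * ((d ^ 2 + u) ^ ((t - 1) / 2) * (d ^ 2 + u) ^ (s - 1/2 - t/2)) := by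
      nth_rewrite 2 [← rpow_one (d ^ 2 + u)]
      rw [← rpow_add hw, ← rpow_add hw]; congr 1; ring
    have e2 : (d ^ 2 + u) ^ ((t - 1) / 2) ≤ d ^ (t - 1) := by
      calc (d ^ 2 + u) ^ ((t - 1) / 2) ≤ (d ^ 2) ^ ((t - 1) / 2) :=
            rpow_le_rpow_of_nonpos (by positivity) (by linarith) (by linarith)
        _ = d ^ (t - 1) := by
            rw [← rpow_natCast, ← rpow_mul hd.le]; congr 1; push_cast; ring
    have e3 : (d ^ 2 + u) ^ (s - 1/2 - t/2) ≤ u ^ (s - 1/2 - t/2) :=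
      rpow_le_rpow_of_nonpos hu0 (by linarith [sq_nonneg d]) (by linarith)
    calc u ^ (-(3/4) : ℝ) * (π / (d ^ 2 + u) * F (d ^ 2 + u))
        ≤ u ^ (-(3/4) : ℝ) * (π / (d ^ 2 + u) * (8 * C * (d ^ 2 + u) ^ s)) := by
          gcongr; exact hFC _ hw
      _ = u ^ (-(3/4) : ℝ) * (8 * π * C * ((d ^ 2 + u) ^ ((t - 1) / 2) * (d ^ 2 + u) ^ (s - 1/2 - t/2))) := by
          rw [e1]; field_simp
      _ ≤ u ^ (-(3/4) : ℝ) * (8 * π * C1 * (d ^ (t - 1) * u ^ (s - 1/2 - t/2))) := by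
          gcongr
      _ = 8 * π * C1 * d ^ (t - 1) * (u ^ (-(3/4) : ℝ) * u ^ (s - 1/2 - t/2)) := by ring
      _ = _ := by
          rw [← rpow_add hu0]; congr 2; rw [hkdef]; ring
  have b2 : ∫⁻ u in Set.Ioi (1:ℝ), ENNReal.ofReal (u ^ (-(3/4) : ℝ) *
      (π / (d ^ 2 + u) * F (d ^ 2 + u))) ≤ ENNReal.ofReal (8 * π * C1 * d ^ (t - 1) * (2 / k)) := by
    have hval : ∫ u in Set.Ioi (1:ℝ), u ^ (-(7/4) : ℝ) = 4/3 := by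
      rw [integral_Ioi_rpow_of_lt (by norm_num) one_pos]; norm_num
    calc _ ≤ ∫⁻ u in Set.Ioi (1:ℝ), ENNReal.ofReal (π * u ^ (-(7/4) : ℝ)) := by
          refine lintegral_mono_ae ?_
          filter_upwards [ae_restrict_mem measurableSet_Ioi] with u hu
          have hu1 : 1 < u := hu
          have hu0 : 0 < u := by linarith
          apply ENNReal.ofReal_le_ofReal
          have e : u ^ (-(7/4) : ℝ) = u ^ (-(3/4) : ℝ) * u⁻¹ := by
            rw [← rpow_neg_one u, ← rpow_add hu0]; norm_num
          have hw : 0 < d ^ 2 + u := by positivity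
          calc u ^ (-(3/4) : ℝ) * (π / (d ^ 2 + u) * F (d ^ 2 + u))
              ≤ u ^ (-(3/4) : ℝ) * (π / u * 1) := by
                have := hF0 _ hw
                have h2 : π / (d ^ 2 + u) ≤ π / u := by
                  gcongr; linarith [sq_nonneg d]
                have h3 : π / (d ^ 2 + u) * F (d ^ 2 + u) ≤ π / (d ^ 2 + u) * 1 := by
                  gcongr
                apply mul_le_mul_of_nonneg_left _ (by positivity)
                linarith
            _ = _ := by rw [e]; ring
      _ = ENNReal.ofReal (π * (4/3)) := by
          rw [← hval, ← integral_const_mul, ofReal_integral_eq_lintegral_ofReal]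
          · exact (integrableOn_Ioi_rpow_of_lt (by norm_num) one_pos).const_mul _
          · filter_upwards [ae_restrict_mem measurableSet_Ioi] with u hu
            have hu1 : 1 < u := hu
            have hu0 : 0 < u := by linarith
            positivity
      _ ≤ _ := by
          apply ENNReal.ofReal_le_ofReal
          have : 4/3 ≤ 2 / k := by rw [le_div_iff₀ hk]; linarith
          calc π * (4/3) = 1 * π * 1 * 1 * (4/3) := by ring
            _ ≤ 8 * π * C1 * d ^ (t - 1) * (2 / k) := by gcongr; norm_num
  refine (add_le_add b1 b2).trans ?_
  rw [← ENNReal.ofReal_add (by positivity) (by positivity)]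
  apply ENNReal.ofReal_le_ofReal
  apply le_of_eq; ring

lemma bin_bound (P : Measure Ω) [IsProbabilityMeasure P]
    (W W' : Ω → EuclideanSpace ℝ (Fin 2)) (hW : Measurable W) (hW' : Measurable W')
    (hi : IndepFun W W' P) (hm : Measure.map W P = Measure.map W' P)
    (s t C d r : ℝ) (hs0 : 1/2 < s) (hs1 : s < 1) (ht1 : t ≤ 1) (hst : s < t)
    (hk : 0 < 2 * s - t - 1/2) (hC : 0 < C) (hF : Frostman P W (2 * s) C)
    (hd : 0 < d) (hd1 : d ≤ 1) (hdr : d ≤ r) (S : Set Ω) (hSm : MeasurableSet S)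
    (hS : ∀ ω ∈ S, r - d ≤ dist (W ω) (W' ω) ∧ dist (W ω) (W' ω) ≤ r) :
    (P S).toReal ≤ 1280 / Gamma (1/4) * r ^ (1/2 : ℝ) * max C 1 * d ^ t / (2 * s - t - 1/2) := by
  have hG : 0 < Gamma (1/4) := Gamma_pos_of_pos (by norm_num)
  have hr : 0 < r := by linarith
  set X : Ω → EuclideanSpace ℝ (Fin 2) := fun ω => W ω - W' ω with hXdef
  have hX : Measurable X := hW.sub hW'
  have hc := cos_split P W W' hW hW' hi hm
  have hmX : ∀ ξ, mX P X ξ = (∫ ω, cos (inner ℝ ξ (W ω)) ∂P) ^ 2 +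
      (∫ ω, sin (inner ℝ ξ (W ω)) ∂P) ^ 2 := by
    intro ξ
    have := hc ξ 0
    simp only [sub_zero, cos_zero, mul_one] at this
    exact this
  have hlow := lower P X hX d r hd hdr S hSm (by
    intro ω hω; have := hS ω hω; rw [dist_eq_norm] at this; exact this)
  have hup := upper P X hX (fun ξ a => by rw [hmX]; exact hc ξ a)
    (fun ξ => by rw [hmX]; positivity) (d ^ 2) r (by positivity) hr
  have hexp := exp_bound P X hX s C (by linarith) hs1 hC
    (fun r hr => frost_diff P W W' hW hW' hi s C hC hF r hr)
  have hexp1 : ∀ w : ℝ, 0 < w → ∫ ω, exp (-‖X ω‖ ^ 2 / (4 * w)) ∂P ≤ 1 := by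
    intro w hw
    have hb : ∀ ω, exp (-‖X ω‖ ^ 2 / (4 * w)) ≤ 1 := fun ω => exp_le_one_iff.2
      (div_nonpos_of_nonpos_of_nonneg (by linarith [sq_nonneg ‖X ω‖]) (by positivity))
    have := integral_mono_of_nonneg (μ := P) (f := fun ω => exp (-‖X ω‖ ^ 2 / (4 * w)))
      (g := fun _ => (1:ℝ)) (Filter.Eventually.of_forall fun _ => exp_nonneg _) (integrable_const _)
      (Filter.Eventually.of_forall hb)
    simpa using this
  have hu := u_int s t C (max C 1) d hs1 ht1 hst hk hC (le_max_left _ _) (le_max_right _ _) hd hd1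
    (fun w => ∫ ω, exp (-‖X ω‖ ^ 2 / (4 * w)) ∂P) hexp1 hexp
  have ecm : ∀ w : ℝ, ∫ ω, π / w * exp (-‖X ω‖ ^ 2 / (4 * w)) ∂P =
      π / w * ∫ ω, exp (-‖X ω‖ ^ 2 / (4 * w)) ∂P := fun w => integral_const_mul _ _
  simp_rw [ecm] at hup
  have h1 := hup.trans (mul_le_mul_right hu _)
  have hmax : 0 < max C 1 := by positivity
  rw [← ENNReal.ofReal_mul (by positivity), ENNReal.ofReal_le_ofReal_iff (by positivity)] at h1
  have h2 := hlow.trans h1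
  rw [← le_div_iff₀ (by positivity)] at h2
  refine h2.trans (le_of_eq ?_)
  have e1 : d ^ (t - 1) = d ^ t / d := by rw [rpow_sub_one hd.ne']
  have e2 : r ^ (-(1/2) : ℝ) = r ^ (1/2 : ℝ) / r := by
    rw [← rpow_sub_one hr.ne']; norm_num
  rw [e1, e2]
  field_simp
  ring

lemma ent_lower (P : Measure Ω) [IsProbabilityMeasure P] (f : Ω → ℝ) (hf : Measurable f)
    (T : Finset ℝ) (hT : ∀ᵐ ω ∂P, f ω ∈ T) (M : ℝ)
    (hb : ∀ z ∈ T, (P (f ⁻¹' {z})).toReal ≤ M) :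
    - Real.logb 2 M ≤ entOf P f := by
  have hsum : ∑ z ∈ T, (P (f ⁻¹' {z})).toReal = 1 := by
    rw [← ENNReal.toReal_sum (fun _ _ => measure_ne_top _ _),
      sum_measure_preimage_singleton T (fun y _ => hf (measurableSet_singleton y))]
    have : P (f ⁻¹' T) = 1 := by
      rw [prob_compl_eq_zero_iff (hf T.measurableSet) |>.1]
      exact hT
    rw [this]; simp
  unfold entOf
  rw [tsum_eq_sum (s := T)]
  · calc - Real.logb 2 M = ∑ z ∈ T, (P (f ⁻¹' {z})).toReal * (- Real.logb 2 M) := by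
          rw [← Finset.sum_mul, hsum, one_mul]
      _ ≤ _ := by
          apply Finset.sum_le_sum
          intro z hz
          rw [← mul_neg]
          rcases eq_or_lt_of_le (ENNReal.toReal_nonneg (a := P (f ⁻¹' {z}))) with h | h
          · rw [← h]; simp
          · have := Real.logb_le_logb_of_le one_lt_two h (hb z hz)
            gcongr
  · intro z hz
    have : P (f ⁻¹' {z}) = 0 := by
      refine measure_mono_null ?_ hT
      intro ω hω
      simp only [Set.mem_preimage, Set.mem_singleton_iff] at hω
      simp only [Set.mem_compl_iff, Set.mem_ofPred_eq, hω]
      exact hz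
    simp [this]

end prob3

lemma logb_max (x : ℝ) : Real.logb 2 (max x 1) ≤ logPlus x := by
  unfold logPlus
  rcases le_total x 1 with h | h
  · rw [max_eq_right h]; simp
  · rw [max_eq_left h]; exact le_max_left _ _

/-- Theorem (entropy of the distance function, large dimension): there is an absolute `A > 0`
and for each `t` a constant `B = B(t) > 0` such that: whenever `1/2 < s < 1`, `C, R > 0`,
`W` is a `(2s,C)`-Frostman random variable with values in `B(0,R) ⊂ ℝ²` and `W'` is an
independent copy of `W`, and `t ≤ 1`, `s < t < 2s − 1/2`, then for every `n`,
`Hₙ(|W − W'|) ≥ nt − log₊C − A log₊R − A |log(2s − t − 1/2)| − B`. -/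
theorem entropy_distance_large :
    ∃ A : ℝ, 0 < A ∧
      ∀ t : ℝ, ∃ B : ℝ, 0 < B ∧
        ∀ (s C R : ℝ), 1 / 2 < s → s < 1 → 0 < C → 0 < R →
          ∀ (Ω : Type) (mΩ : MeasurableSpace Ω) (P : Measure Ω),
            IsProbabilityMeasure P →
            ∀ (W W' : Ω → EuclideanSpace ℝ (Fin 2)), Measurable W → Measurable W' →
              Frostman P W (2 * s) C →
              (∀ ω, W ω ∈ Metric.ball (0 : EuclideanSpace ℝ (Fin 2)) R) →
              IndepFun W W' P →
              Measure.map W P = Measure.map W' P →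
              t ≤ 1 → s < t → t < 2 * s - 1 / 2 →
              ∀ n : ℕ,
                (n : ℝ) * t - logPlus C - A * logPlus R -
                    A * |Real.logb 2 (2 * s - t - 1 / 2)| - B ≤
                  Hn P n (fun ω => dist (W ω) (W' ω)) := by
  have hG : 0 < Gamma (1/4) := Gamma_pos_of_pos (by norm_num)
  refine ⟨1, one_pos, fun t => ⟨|Real.logb 2 (1280 / Gamma (1/4))| + 2, by positivity, ?_⟩⟩
  intro s C R hs0 hs1 hC hR Ω mΩ P hP W W' hW hW' hF hWR hi hm ht1 hst hts n
  have hk : 0 < 2 * s - t - 1/2 := by linarith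
  have h2n : (0:ℝ) < 2 ^ n := by positivity
  set d : ℝ := ((2:ℝ) ^ n)⁻¹ with hd
  have hd0 : 0 < d := by positivity
  have hd1 : d ≤ 1 := inv_le_one_of_one_le₀ (one_le_pow₀ one_le_two)
  have hmax : 0 < max C 1 := by positivity
  have hdm : Measurable fun ω => dist (W ω) (W' ω) := hW.dist hW'
  have hfm : Measurable fun ω => Dn n (dist (W ω) (W' ω)) := by
    unfold Dn
    have : Measurable fun ω => ⌊(2:ℝ) ^ n * dist (W ω) (W' ω)⌋ := (hdm.const_mul _).floor
    exact (measurable_from_top.comp this).div_const _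
  have hW'R : ∀ᵐ ω ∂P, W' ω ∈ Metric.ball (0 : EuclideanSpace ℝ (Fin 2)) R := by
    have : ∀ᵐ x ∂(Measure.map W P), x ∈ Metric.ball (0 : EuclideanSpace ℝ (Fin 2)) R := by
      exact (ae_map_iff (p := fun x => x ∈ Metric.ball (0 : EuclideanSpace ℝ (Fin 2)) R)
        hW.aemeasurable Metric.isOpen_ball.measurableSet).2 (Filter.Eventually.of_forall hWR)
    rw [hm] at this
    exact ae_of_ae_map hW'.aemeasurable this
  let T : Finset ℝ := (Finset.range (⌊(2:ℝ) ^ n * (2 * R)⌋₊ + 1)).image fun k : ℕ => (k:ℝ) / 2 ^ n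
  have hT : ∀ᵐ ω ∂P, Dn n (dist (W ω) (W' ω)) ∈ T := by
    filter_upwards [hW'R] with ω hω
    have h1 := hWR ω
    rw [Metric.mem_ball] at h1 hω
    have hlt : dist (W ω) (W' ω) ≤ 2 * R := by
      have := dist_triangle_right (W ω) (W' ω) 0
      linarith
    refine Finset.mem_image.2 ⟨⌊(2:ℝ) ^ n * dist (W ω) (W' ω)⌋₊, ?_, ?_⟩
    · rw [Finset.mem_range, Nat.lt_succ_iff]
      apply Nat.floor_mono
      gcongr
    · unfold Dn
      rw [natCast_floor_eq_intCast_floor (by positivity)]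
  have hb : ∀ z ∈ T, (P ((fun ω => Dn n (dist (W ω) (W' ω))) ⁻¹' {z})).toReal ≤
      1280 / Gamma (1/4) * (2 * R + 1) ^ (1/2 : ℝ) * max C 1 * d ^ t / (2 * s - t - 1/2) := by
    intro z hz
    obtain ⟨k, hk1, rfl⟩ := Finset.mem_image.1 hz
    rw [Finset.mem_range, Nat.lt_succ_iff, Nat.le_floor_iff (by positivity)] at hk1
    have hkd : (k:ℝ) * d ≤ 2 * R := by
      rw [hd, ← div_eq_mul_inv, div_le_iff₀ h2n]; linarith
    have hr0 : d ≤ ((k:ℝ) + 1) * d := by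
      have : 0 ≤ (k:ℝ) * d := by positivity
      linarith
    have := bin_bound P W W' hW hW' hi hm s t C d (((k:ℝ) + 1) * d) hs0 hs1 ht1 hst hk hC hF hd0 hd1
      hr0 _ (hfm (measurableSet_singleton ((k:ℝ) / 2 ^ n))) (by
        intro ω hω
        simp only [Set.mem_preimage, Set.mem_singleton_iff, Dn] at hω
        rw [div_left_inj' h2n.ne'] at hω
        have hω' : ⌊(2:ℝ) ^ n * dist (W ω) (W' ω)⌋ = (k:ℤ) := by exact_mod_cast hω
        rw [Int.floor_eq_iff] at hω'
        have hdd : dist (W ω) (W' ω) = (2 ^ n * dist (W ω) (W' ω)) * d := by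
          rw [hd]; field_simp
        push_cast at hω'
        constructor
        · rw [hdd]
          have := mul_le_mul_of_nonneg_right hω'.1 hd0.le
          linarith
        · rw [hdd]
          exact mul_le_mul_of_nonneg_right hω'.2.le hd0.le)
    refine this.trans ?_
    gcongr
    linarith
  have hent := ent_lower P _ hfm T hT _ hb
  unfold Hn
  refine le_trans ?_ hent
  have hK : 0 < 1280 / Gamma (1/4) := by positivity
  have hR1 : 0 < 2 * R + 1 := by positivity
  have hRp : 0 < (2 * R + 1) ^ (1/2 : ℝ) := by positivity
  have hdt : 0 < d ^ t := by positivity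
  rw [Real.logb_div (by positivity) hk.ne', Real.logb_mul (by positivity) hdt.ne',
    Real.logb_mul (by positivity) hmax.ne', Real.logb_mul hK.ne' hRp.ne',
    Real.logb_rpow_eq_mul_logb_of_pos hR1, Real.logb_rpow_eq_mul_logb_of_pos hd0]
  have e1 : Real.logb 2 d = -n := by
    rw [hd, Real.logb_inv, Real.logb_pow, Real.logb_self_eq_one one_lt_two, mul_one]
  rw [e1]
  have e2 : Real.logb 2 (2 * R + 1) ≤ 2 + logPlus R := by
    have h1 : Real.logb 2 (2 * R + 1) ≤ Real.logb 2 (4 * max R 1) := by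
      apply Real.logb_le_logb_of_le one_lt_two hR1
      linarith [le_max_left R 1, le_max_right R 1]
    have hm1 : 0 < max R 1 := by positivity
    rw [Real.logb_mul (by norm_num) hm1.ne'] at h1
    have : Real.logb 2 4 = 2 := by
      rw [show (4:ℝ) = 2 ^ (2:ℕ) by norm_num, Real.logb_pow, Real.logb_self_eq_one one_lt_two]
      norm_num
    linarith [logb_max R]
  have e3 := logb_max C
  have e4 := le_abs_self (Real.logb 2 (1280 / Gamma (1/4)))
  have e5 := neg_abs_le (Real.logb 2 (2 * s - t - 1/2))
  have e6 : 0 ≤ logPlus R := le_max_right _ _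
  linarith
end
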